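/- arXiv:2403.02851 — 3 statements merged into one kernel-verified Lean document; each statement's English description precedes it below -/
import Mathlib

section
/- For every quaternion α ∈ ℍ, the quaternionic Mahler measure of the linear polynomial q ↦ q − α equals |α|²/4 if |α| ≤ 1, and equals 1/(4|α|²) + log|α| if |α| > 1. -/
open MeasureTheory Quaternion

noncomputable instance : MeasurableSpace (Quaternion ℝ) := borel _
instance : BorelSpace (Quaternion ℝ) := ⟨rfl⟩
instance : Nonempty (Metric.sphere (0 : Quaternion ℝ) 1) := ⟨⟨1, by simp⟩⟩

/-- The probability Haar measure `μ` on the group `T¹(ℍ)` of unit quaternions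
(the Haar measure normalized so that the whole group has measure `1`). -/
noncomputable def muH : Measure (Metric.sphere (0 : Quaternion ℝ) 1) :=
  Measure.haarMeasure ⊤

/-- The quaternionic Mahler measure `m_ℍ(f) = ∫_{T¹(ℍ)} log |f(q)| dμ(q)`. -/
noncomputable def mahlerH (f : Quaternion ℝ → Quaternion ℝ) : ℝ :=
  ∫ q : Metric.sphere (0 : Quaternion ℝ) 1, Real.log ‖f q‖ ∂muH

open Polynomial Filter Topology

/-!
Left translation by the one-parameter subgroup `exp (t u)`, `u² = -1`, leaves `∫ F dμ` unchanged,
so its derivative in `t` vanishes. For `F q = g (Re q) · Re (u q)`, summed over `u = i, j, k`,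
this gives `∫ (1 - x²) g'(x) - 3 x g(x) dμ = 0` with `x = Re q`. Taking `g = Uₙ'` turns the
integrand into a multiple of the Chebyshev polynomial `Uₙ`, so `∫ Uₙ (Re q) dμ = 0` for `n ≥ 1`,
and `2 Tₙ = Uₙ - Uₙ₋₂` shows that `T₂` is the only `Tₙ`, `n ≥ 1`, with a nonzero integral.
For `0 ≤ r < 1` only that term survives in `log |q - r| = - ∑ rⁿ Tₙ (Re q) / n`, leaving `r² / 4`.
The case `r = 1` follows by monotone convergence, the case `|α| > 1` by the inversion `α ↦ ᾱ⁻¹`,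
and invariance of `μ` reduces every `α` to the real number `|α|`.
-/

section Integration

variable {X : Type*} [MeasurableSpace X] {μ : Measure X}

lemma integrable_of_tendsto_of_monotone {f : ℕ → X → ℝ} {F : X → ℝ} {C : ℝ}
    (hf : ∀ n, Integrable (f n) μ) (h_mono : ∀ᵐ x ∂μ, Monotone fun n => f n x)
    (h_tendsto : ∀ᵐ x ∂μ, Tendsto (fun n => f n x) atTop (𝓝 (F x)))
    (h_le : ∀ n, ∫ x, f n x ∂μ ≤ C) : Integrable F μ := by
  have hF_meas : AEStronglyMeasurable F μ :=
    aestronglyMeasurable_of_tendsto_ae atTop (fun n => (hf n).aestronglyMeasurable) h_tendsto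
  suffices Integrable (F - f 0) μ by simpa using this.add (hf 0)
  have hF_ge : 0 ≤ᵐ[μ] F - f 0 := by
    filter_upwards [h_mono, h_tendsto] with x hx_mono hx_tendsto
    exact sub_nonneg.2 (ge_of_tendsto' hx_tendsto fun n => hx_mono n.zero_le)
  have h_lintegral : Tendsto (fun n => ∫⁻ x, ENNReal.ofReal ((f n - f 0) x) ∂μ) atTop
      (𝓝 (∫⁻ x, ENNReal.ofReal ((F - f 0) x) ∂μ)) := by
    refine lintegral_tendsto_of_tendsto_of_monotone
      (fun n => ((hf n).sub (hf 0)).aemeasurable.ennreal_ofReal) ?_ ?_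
    · filter_upwards [h_mono] with x hx m n hmn
      exact ENNReal.ofReal_le_ofReal (sub_le_sub_right (hx hmn) _)
    · filter_upwards [h_tendsto] with x hx
      exact ENNReal.tendsto_ofReal (hx.sub_const _)
  refine ⟨hF_meas.sub (hf 0).aestronglyMeasurable,
    (hasFiniteIntegral_iff_ofReal hF_ge).2 (lt_of_le_of_lt
      (le_of_tendsto' h_lintegral fun n => ?_) (ENNReal.ofReal_lt_top (r := C - ∫ x, f 0 x ∂μ)))⟩
  rw [← ofReal_integral_eq_lintegral_ofReal ((hf n).sub (hf 0)), integral_sub' (hf n) (hf 0)]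
  · exact ENNReal.ofReal_le_ofReal (sub_le_sub_right (h_le n) _)
  · filter_upwards [h_mono] with x hx
    exact sub_nonneg.2 (hx n.zero_le)

variable {E : Type*} [NormedAddCommGroup E] [IsFiniteMeasure μ]

lemma integrable_of_continuous [TopologicalSpace X] [OpensMeasurableSpace X] [CompactSpace X]
    {f : X → E} (hf : Continuous f) : Integrable f μ :=
  hf.integrable_of_hasCompactSupport (HasCompactSupport.of_compactSpace f)

lemma integral_eq_zero_of_hasDerivAt_mul_left [NormedSpace ℝ E] [TopologicalSpace X] [BorelSpace X]
    [CompactSpace X] [Group X] [ContinuousMul X] [μ.IsMulLeftInvariant] {F F' : X → E} {γ : ℝ → X}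
    (hF : Continuous F) (hF' : Continuous F')
    (h_deriv : ∀ t x, HasDerivAt (fun s => F (γ s * x)) (F' (γ t * x)) t) :
    ∫ x, F' x ∂μ = 0 := by
  obtain ⟨C, hC⟩ := isCompact_univ.exists_bound_of_continuousOn hF'.continuousOn
  have h_translate {f : X → E} (hf : Continuous f) (t : ℝ) :
      Integrable (fun x => f (γ t * x)) μ :=
    integrable_of_continuous (hf.comp (continuous_const_mul (γ t)))
  have h_deriv_integral : HasDerivAt (fun t => ∫ x, F (γ t * x) ∂μ) (∫ x, F' (γ 0 * x) ∂μ) 0 :=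
    (hasDerivAt_integral_of_dominated_loc_of_deriv_le
      (F' := fun t x => F' (γ t * x)) (bound := fun _ => C) univ_mem
      (Eventually.of_forall fun t => (h_translate hF t).aestronglyMeasurable) (h_translate hF 0)
      (h_translate hF' 0).aestronglyMeasurable
      (Eventually.of_forall fun x t _ => hC (γ t * x) trivial) (integrable_const C)
      (Eventually.of_forall fun x t _ => h_deriv t x)).2
  simp only [integral_mul_left_eq_self] at h_deriv_integral
  exact h_deriv_integral.unique (hasDerivAt_const _ _)

end Integration

section QuaternionAlgebra

lemma sq_norm_eq_add_sq (q : ℍ) : ‖q‖ ^ 2 = q.re ^ 2 + q.imI ^ 2 + q.imJ ^ 2 + q.imK ^ 2 := by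
  rw [← Quaternion.normSq_def', Quaternion.normSq_eq_norm_mul_self, sq]

lemma abs_re_le_norm (q : ℍ) : |q.re| ≤ ‖q‖ := by
  refine abs_le_of_sq_le_sq ?_ (norm_nonneg q)
  rw [sq_norm_eq_add_sq]
  nlinarith [sq_nonneg q.imI, sq_nonneg q.imJ, sq_nonneg q.imK]

lemma sq_norm_sub_coe (q : ℍ) (r : ℝ) : ‖q - r‖ ^ 2 = ‖q‖ ^ 2 - 2 * r * q.re + r ^ 2 := by
  simp only [sq_norm_eq_add_sq, Quaternion.re_sub, Quaternion.imI_sub, Quaternion.imJ_sub,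
    Quaternion.imK_sub, Quaternion.re_coe, Quaternion.imI_coe, Quaternion.imJ_coe,
    Quaternion.imK_coe]
  ring

lemma norm_sub_eq_norm_mul_norm_sub_inv_star {q α : ℍ} (hq : ‖q‖ = 1) (hα : α ≠ 0) :
    ‖q - α‖ = ‖α‖ * ‖q - (star α)⁻¹‖ := by
  have hq_star : star q * q = 1 := by
    rw [Quaternion.star_mul_self, Quaternion.normSq_eq_norm_mul_self, hq, one_mul,
      Quaternion.coe_one]
  calc ‖q - α‖ = ‖star q * (q - α)‖ := by rw [norm_mul, norm_star, hq, one_mul]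
    _ = ‖(α⁻¹ - star q) * α‖ := by rw [mul_sub, hq_star, sub_mul, inv_mul_cancel₀ hα]
    _ = ‖α‖ * ‖star (q - (star α)⁻¹)‖ := by
      rw [norm_mul, mul_comm, star_sub, star_inv₀, star_star, norm_sub_rev]
    _ = ‖α‖ * ‖q - (star α)⁻¹‖ := by rw [norm_star]

lemma exists_mem_sphere_mul_norm (α : ℍ) :
    ∃ u : Metric.sphere (0 : ℍ) 1, α = u * (‖α‖ : ℍ) := by
  rcases eq_or_ne α 0 with rfl | hα
  · exact ⟨1, by simp⟩
  · have hn : ‖α‖ ≠ 0 := norm_ne_zero_iff.2 hα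
    refine ⟨⟨α * (‖α‖⁻¹ : ℝ), by simp [hn]⟩, ?_⟩
    rw [mul_assoc, ← Quaternion.coe_mul, inv_mul_cancel₀ hn, Quaternion.coe_one, mul_one]

lemma hasDerivAt_re {f : ℝ → ℍ} {f' : ℍ} {t : ℝ} (hf : HasDerivAt f f' t) :
    HasDerivAt (fun s => (f s).re) f'.re t :=
  (LinearMap.toContinuousLinearMap (show ℍ →ₗ[ℝ] ℝ from
    QuaternionAlgebra.reₗ _ _ _)).hasFDerivAt.comp_hasDerivAt t hf

lemma sq_eq_neg_one_of_re_eq_zero {u : ℍ} (h_re : u.re = 0) (h_norm : Quaternion.normSq u = 1) :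
    u ^ 2 = -1 := by
  rw [Quaternion.sq_eq_neg_normSq.2 h_re, h_norm, Quaternion.coe_one]

lemma norm_exp_smul_of_sq_eq_neg_one {u : ℍ} (hu : u ^ 2 = -1) (t : ℝ) :
    ‖NormedSpace.exp (t • u)‖ = 1 := by
  have hu_norm : ‖u‖ = 1 := by
    rw [← pow_eq_one_iff_of_nonneg (norm_nonneg u) two_ne_zero, ← norm_pow, hu, norm_neg, norm_one]
  have hu_re : u.re = 0 := by
    rw [← Quaternion.sq_eq_neg_normSq, hu, Quaternion.normSq_eq_norm_mul_self, hu_norm, one_mul,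
      Quaternion.coe_one]
  rw [Quaternion.norm_exp, Quaternion.re_smul, hu_re, smul_zero, NormedSpace.exp_zero, norm_one]

end QuaternionAlgebra

section HaarMeasure

instance : Measure.IsHaarMeasure muH :=
  Measure.isHaarMeasure_haarMeasure _

instance : IsProbabilityMeasure muH :=
  ⟨Measure.haarMeasure_self⟩

lemma muH_singleton (q : Metric.sphere (0 : ℍ) 1) : muH {q} = 0 := by
  have h_rank : 1 < Module.rank ℝ ℍ := by
    rw [Quaternion.rank_eq_four]
    norm_num
  have : ConnectedSpace (Metric.sphere (0 : ℍ) 1) :=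
    Subtype.connectedSpace (isConnected_sphere h_rank 0 zero_le_one)
  have : Nontrivial (Metric.sphere (0 : ℍ) 1) :=
    ⟨⟨1, -1, ne_neg_of_mem_unit_sphere ℝ 1⟩⟩
  exact measure_singleton q

lemma continuous_re_sphere : Continuous fun q : Metric.sphere (0 : ℍ) 1 => (q : ℍ).re :=
  Quaternion.continuous_re.comp continuous_subtype_val

lemma continuous_re_mul_sphere (u : ℍ) :
    Continuous fun q : Metric.sphere (0 : ℍ) 1 => (u * q).re :=
  Quaternion.continuous_re.comp (continuous_const.mul continuous_subtype_val)

lemma abs_re_sphere_le_one (q : Metric.sphere (0 : ℍ) 1) : |(q : ℍ).re| ≤ 1 :=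
  (abs_re_le_norm q).trans_eq (norm_eq_of_mem_sphere q)

lemma integral_deriv_mul_sq_sub_mul_re {u : ℍ} (hu : u ^ 2 = -1) {g g' : ℝ → ℝ}
    (hg : ∀ x, HasDerivAt g (g' x) x) (hg' : Continuous g') :
    ∫ q, (g' (q : ℍ).re * (u * q).re ^ 2 - g (q : ℍ).re * (q : ℍ).re) ∂muH = 0 := by
  let γ (t : ℝ) : Metric.sphere (0 : ℍ) 1 :=
    ⟨NormedSpace.exp (t • u), mem_sphere_zero_iff_norm.2 (norm_exp_smul_of_sq_eq_neg_one hu t)⟩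
  have hg_cont : Continuous g := continuous_iff_continuousAt.2 fun x => (hg x).continuousAt
  have h_re := continuous_re_sphere
  have h_re_mul := continuous_re_mul_sphere u
  refine integral_eq_zero_of_hasDerivAt_mul_left (γ := γ)
    (F := fun q : Metric.sphere (0 : ℍ) 1 => g (q : ℍ).re * (u * q).re)
    (by fun_prop) (by fun_prop) fun t q => ?_
  have h_exp : HasDerivAt (fun s => (γ s * q : ℍ)) (u * (γ t * q)) t := by
    simpa only [mul_assoc] using (hasDerivAt_exp_smul_const' u t).mul_const (q : ℍ)
  refine (((hg _).comp t (hasDerivAt_re h_exp)).mul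
    (hasDerivAt_re (h_exp.const_mul u))).congr_deriv ?_
  rw [← mul_assoc u u, ← sq, hu]
  simp only [Function.comp_apply, Metric.unitSphere.coe_mul, neg_one_mul, Quaternion.re_neg]
  ring

lemma integral_gegenbauer {g g' : ℝ → ℝ} (hg : ∀ x, HasDerivAt g (g' x) x)
    (hg' : Continuous g') :
    ∫ q, ((1 - (q : ℍ).re ^ 2) * g' (q : ℍ).re - 3 * (q : ℍ).re * g (q : ℍ).re) ∂muH = 0 := by
  let D (u : ℍ) (q : Metric.sphere (0 : ℍ) 1) : ℝ :=
    g' (q : ℍ).re * (u * q).re ^ 2 - g (q : ℍ).re * (q : ℍ).re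
  have hg_cont : Continuous g := continuous_iff_continuousAt.2 fun x => (hg x).continuousAt
  have hD (u : ℍ) : Integrable (D u) muH := by
    have h_re := continuous_re_sphere
    have h_re_mul := continuous_re_mul_sphere u
    exact integrable_of_continuous (by fun_prop)
  have hD_zero {u : ℍ} (hu : u ^ 2 = -1) : ∫ q, D u q ∂muH = 0 :=
    integral_deriv_mul_sq_sub_mul_re hu hg hg'
  let i : ℍ := ⟨0, 1, 0, 0⟩
  let j : ℍ := ⟨0, 0, 1, 0⟩
  let k : ℍ := ⟨0, 0, 0, 1⟩
  have hi : i ^ 2 = -1 :=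
    sq_eq_neg_one_of_re_eq_zero rfl (by rw [Quaternion.normSq_def']; simp [i])
  have hj : j ^ 2 = -1 :=
    sq_eq_neg_one_of_re_eq_zero rfl (by rw [Quaternion.normSq_def']; simp [j])
  have hk : k ^ 2 = -1 :=
    sq_eq_neg_one_of_re_eq_zero rfl (by rw [Quaternion.normSq_def']; simp [k])
  have h_sum (q : Metric.sphere (0 : ℍ) 1) :
      (1 - (q : ℍ).re ^ 2) * g' (q : ℍ).re - 3 * (q : ℍ).re * g (q : ℍ).re =
        D i q + D j q + D k q := by
    have h_norm := sq_norm_eq_add_sq (q : ℍ)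
    rw [norm_eq_of_mem_sphere] at h_norm
    simp only [D, i, j, k, Quaternion.re_mul]
    linear_combination g' (q : ℍ).re * h_norm
  simp_rw [h_sum]
  rw [integral_add ((hD _).fun_add (hD _)) (hD _), integral_add (hD _) (hD _), hD_zero hi,
    hD_zero hj, hD_zero hk, add_zero, add_zero]

end HaarMeasure

section Chebyshev

lemma integrable_eval_re (p : ℝ[X]) :
    Integrable (fun q : Metric.sphere (0 : ℍ) 1 => p.eval (q : ℍ).re) muH :=
  integrable_of_continuous (p.continuous.comp continuous_re_sphere)

lemma integral_eval_chebyshev_U {n : ℤ} (h0 : n ≠ 0) (h2 : n ≠ -2) :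
    ∫ q, (Chebyshev.U ℝ n).eval (q : ℍ).re ∂muH = 0 := by
  have h_ode (x : ℝ) : (1 - x ^ 2) * (derivative (derivative (Chebyshev.U ℝ n))).eval x -
      3 * x * (derivative (Chebyshev.U ℝ n)).eval x =
        -((n + 2) * n) * (Chebyshev.U ℝ n).eval x := by
    have h := congr_arg (eval x)
      (Chebyshev.one_sub_X_sq_mul_derivative_derivative_U_eq_poly_in_U (R := ℝ) n)
    simp only [Function.iterate_succ, Function.iterate_zero, Function.comp_apply, id_eq, eval_mul,
      eval_sub, eval_add, eval_one, eval_pow, eval_X, eval_ofNat, eval_intCast] at h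
    linear_combination h
  have h := integral_gegenbauer (derivative (Chebyshev.U ℝ n)).hasDerivAt
    (derivative (derivative (Chebyshev.U ℝ n))).continuous
  simp_rw [h_ode] at h
  rw [integral_const_mul] at h
  refine (mul_eq_zero.1 h).resolve_left (neg_ne_zero.2 (mul_ne_zero ?_ (Int.cast_ne_zero.2 h0)))
  exact_mod_cast (by omega : n + 2 ≠ 0)

lemma integral_eval_chebyshev_T_eq (n : ℤ) :
    ∫ q, (Chebyshev.T ℝ n).eval (q : ℍ).re ∂muH =
      (∫ q, (Chebyshev.U ℝ n).eval (q : ℍ).re ∂muH -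
        ∫ q, (Chebyshev.U ℝ (n - 2)).eval (q : ℍ).re ∂muH) / 2 := by
  rw [← integral_sub (integrable_eval_re _) (integrable_eval_re _), ← integral_div]
  congr with q
  have h := congr_arg (eval (q : ℍ).re) (Chebyshev.two_mul_T_eq_U_sub_U ℝ (n - 2))
  simp only [sub_add_cancel, eval_mul, eval_ofNat, eval_sub] at h
  linarith

lemma integral_eval_chebyshev_T {n : ℤ} (h0 : n ≠ 0) (h2 : n ≠ 2) (h2' : n ≠ -2) :
    ∫ q, (Chebyshev.T ℝ n).eval (q : ℍ).re ∂muH = 0 := by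
  rw [integral_eval_chebyshev_T_eq, integral_eval_chebyshev_U h0 h2',
    integral_eval_chebyshev_U (by omega) (by omega), sub_zero, zero_div]

lemma integral_eval_chebyshev_T_two :
    ∫ q, (Chebyshev.T ℝ 2).eval (q : ℍ).re ∂muH = -1 / 2 := by
  rw [integral_eval_chebyshev_T_eq, integral_eval_chebyshev_U two_ne_zero (by norm_num)]
  simp

lemma hasSum_pow_div_mul_eval_chebyshev_T {r x : ℝ} (hr : |r| < 1) (hx : |x| ≤ 1) :
    HasSum (fun n : ℕ => r ^ n / n * (Chebyshev.T ℝ n).eval x)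
      (-(Real.log (1 - 2 * r * x + r ^ 2) / 2)) := by
  obtain ⟨θ, rfl⟩ : ∃ θ, Real.cos θ = x :=
    ⟨Real.arccos x, Real.cos_arccos (abs_le.1 hx).1 (abs_le.1 hx).2⟩
  have hz : ‖(r : ℂ) * Complex.exp (θ * Complex.I)‖ < 1 := by
    rwa [norm_mul, Complex.norm_exp_ofReal_mul_I, mul_one, Complex.norm_real]
  convert Complex.hasSum_re (Complex.hasSum_taylorSeries_neg_log hz) using 1
  · ext n
    have h_term : ((r : ℂ) * Complex.exp (θ * Complex.I)) ^ n / n =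
        (r ^ n / n : ℝ) * Complex.exp ((n * θ : ℝ) * Complex.I) := by
      rw [mul_pow, ← Complex.exp_nat_mul]
      push_cast
      ring_nf
    rw [h_term, Complex.re_ofReal_mul, Complex.exp_ofReal_mul_I_re, Chebyshev.T_real_cos,
      Int.cast_natCast]
  · rw [Complex.neg_re, Complex.log_re, Complex.norm_def, Real.log_sqrt (Complex.normSq_nonneg _)]
    congr 3
    simp only [Complex.normSq_apply, Complex.sub_re, Complex.one_re, Complex.sub_im,
      Complex.one_im, Complex.re_ofReal_mul, Complex.im_ofReal_mul, Complex.exp_ofReal_mul_I_re,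
      Complex.exp_ofReal_mul_I_im]
    linear_combination -r ^ 2 * Real.sin_sq_add_cos_sq θ

lemma hasSum_log_norm_sub_coe {r : ℝ} (hr : |r| < 1) (q : Metric.sphere (0 : ℍ) 1) :
    HasSum (fun n : ℕ => r ^ n / n * (Chebyshev.T ℝ n).eval (q : ℍ).re)
      (-Real.log ‖(q : ℍ) - r‖) := by
  convert hasSum_pow_div_mul_eval_chebyshev_T hr (abs_re_sphere_le_one q) using 2
  have h_norm := sq_norm_sub_coe q r
  rw [norm_eq_of_mem_sphere, one_pow] at h_norm
  rw [← h_norm, Real.log_pow]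
  push_cast
  ring

end Chebyshev

section MahlerMeasure

lemma mahlerH_sub_coe_of_abs_lt_one {r : ℝ} (hr : |r| < 1) :
    mahlerH (fun q => q - r) = r ^ 2 / 4 := by
  let F (n : ℕ) (q : Metric.sphere (0 : ℍ) 1) : ℝ :=
    r ^ n / n * (Chebyshev.T ℝ n).eval (q : ℍ).re
  have hF_bound (n : ℕ) (q) : ‖F n q‖ ≤ |r| ^ n := by
    have h_coeff : |r ^ n / n| ≤ |r| ^ n := by
      rw [abs_div, abs_pow, Nat.abs_cast]
      rcases n.eq_zero_or_pos with rfl | hn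
      · simp
      · exact div_le_self (by positivity) (by exact_mod_cast hn)
    rw [norm_mul]
    exact (mul_le_of_le_one_right (norm_nonneg _)
      (Chebyshev.abs_eval_T_real_le_one n (abs_re_sphere_le_one q))).trans h_coeff
  have h_sum : HasSum (fun n => ∫ q, F n q ∂muH) (∫ q, -Real.log ‖(q : ℍ) - r‖ ∂muH) :=
    hasSum_integral_of_dominated_convergence (fun n _ => |r| ^ n)
      (fun n => ((integrable_eval_re _).const_mul _).aestronglyMeasurable)
      (fun n => Eventually.of_forall (hF_bound n))
      (Eventually.of_forall fun _ => summable_geometric_of_lt_one (abs_nonneg r) hr)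
      (integrable_const _) (Eventually.of_forall (hasSum_log_norm_sub_coe hr))
  have hF_zero (n : ℕ) (hn : n ≠ 2) : ∫ q, F n q ∂muH = 0 := by
    rcases eq_or_ne n 0 with rfl | h0
    · simp [F]
    · rw [integral_const_mul, integral_eval_chebyshev_T (by omega) (by omega) (by omega), mul_zero]
  have h_two : -mahlerH (fun q => q - r) = r ^ 2 / 2 * (-1 / 2) := by
    rw [mahlerH, ← integral_neg, h_sum.unique (hasSum_single 2 hF_zero), integral_const_mul,
      Nat.cast_ofNat, Nat.cast_ofNat, integral_eval_chebyshev_T_two]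
  linarith

lemma integrable_log_norm_sub {α : ℍ} (hα : ‖α‖ ≠ 1) :
    Integrable (fun q : Metric.sphere (0 : ℍ) 1 => Real.log ‖(q : ℍ) - α‖) muH := by
  refine integrable_of_continuous
    ((continuous_subtype_val.sub continuous_const).norm.log fun q hq => hα ?_)
  rw [← show (q : ℍ) = α from sub_eq_zero.1 (norm_eq_zero.1 hq), norm_eq_of_mem_sphere]

-- The function `‖q - r‖² / r = r + r⁻¹ - 2 Re q` of `r` is decreasing on `(0, 1]`.
lemma half_log_sub_log_norm_sub_coe_le {r s : ℝ} (hr : 0 < r) (hrs : r ≤ s) (hs : s < 1)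
    (q : Metric.sphere (0 : ℍ) 1) :
    Real.log r / 2 - Real.log ‖(q : ℍ) - r‖ ≤ Real.log s / 2 - Real.log ‖(q : ℍ) - s‖ := by
  have h_pos {t : ℝ} (ht0 : 0 < t) (ht1 : t < 1) : 0 < ‖(q : ℍ) - t‖ ^ 2 := by
    rw [sq_norm_sub_coe, norm_eq_of_mem_sphere]
    nlinarith [(abs_le.1 (abs_re_sphere_le_one q)).2, sq_pos_of_pos (sub_pos.2 ht1)]
  have hs0 : 0 < s := hr.trans_le hrs
  have h_div : ‖(q : ℍ) - s‖ ^ 2 / s ≤ ‖(q : ℍ) - r‖ ^ 2 / r := by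
    rw [div_le_div_iff₀ hs0 hr, sq_norm_sub_coe, sq_norm_sub_coe, norm_eq_of_mem_sphere]
    have h_rs : r * s ≤ 1 := mul_le_one₀ (hrs.trans hs.le) hs0.le hs.le
    linarith [mul_nonneg (sub_nonneg.2 hrs) (sub_nonneg.2 h_rs)]
  have h_log := Real.log_le_log (div_pos (h_pos hs0 hs) hs0) h_div
  rw [Real.log_div (h_pos hs0 hs).ne' hs0.ne',
    Real.log_div (h_pos hr (hrs.trans_lt hs)).ne' hr.ne', Real.log_pow, Real.log_pow] at h_log
  push_cast at h_log
  linarith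

lemma mahlerH_sub_one : mahlerH (fun q => q - 1) = 1 / 4 := by
  obtain ⟨r, hr_mono, hr_mem, hr_lim⟩ := exists_seq_strictMono_tendsto' (zero_lt_one (α := ℝ))
  have hr_abs (n : ℕ) : |r n| < 1 := by rw [abs_of_pos (hr_mem n).1]; exact (hr_mem n).2
  let f (n : ℕ) (q : Metric.sphere (0 : ℍ) 1) : ℝ := Real.log (r n) / 2 - Real.log ‖(q : ℍ) - r n‖
  have h_log_int (n : ℕ) :
      Integrable (fun q : Metric.sphere (0 : ℍ) 1 => Real.log ‖(q : ℍ) - r n‖) muH :=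
    integrable_log_norm_sub (by rw [Quaternion.norm_coe]; exact (hr_abs n).ne)
  have hf (n : ℕ) : Integrable (f n) muH := (integrable_const _).sub (h_log_int n)
  have hf_integral (n : ℕ) : ∫ q, f n q ∂muH = Real.log (r n) / 2 - r n ^ 2 / 4 := by
    rw [integral_sub (integrable_const _) (h_log_int n), integral_const, probReal_univ, one_smul,
      ← mahlerH_sub_coe_of_abs_lt_one (hr_abs n), mahlerH]
  have hf_mono : ∀ᵐ q ∂muH, Monotone fun n => f n q := Eventually.of_forall fun q m n hmn =>
    half_log_sub_log_norm_sub_coe_le (hr_mem m).1 (hr_mono.monotone hmn) (hr_mem n).2 q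
  have hf_tendsto : ∀ᵐ q : Metric.sphere (0 : ℍ) 1 ∂muH,
      Tendsto (fun n => f n q) atTop (𝓝 (-Real.log ‖(q : ℍ) - 1‖)) := by
    filter_upwards [compl_mem_ae_iff.2 (muH_singleton 1)] with q hq
    have h_ne : ‖(q : ℍ) - (1 : ℝ)‖ ≠ 0 :=
      norm_ne_zero_iff.2 (sub_ne_zero.2 fun h => hq (Subtype.ext h))
    have h_norm : Tendsto (fun n => ‖(q : ℍ) - r n‖) atTop (𝓝 ‖(q : ℍ) - (1 : ℝ)‖) :=
      (((Quaternion.continuous_coe.tendsto 1).comp hr_lim).const_sub _).norm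
    simpa using ((hr_lim.log one_ne_zero).div_const 2).sub (h_norm.log h_ne)
  have h_int : Integrable (fun q : Metric.sphere (0 : ℍ) 1 => -Real.log ‖(q : ℍ) - 1‖) muH := by
    refine integrable_of_tendsto_of_monotone (C := 0) hf hf_mono hf_tendsto fun n => ?_
    rw [hf_integral]
    linarith [Real.log_nonpos (hr_mem n).1.le (hr_mem n).2.le, sq_nonneg (r n)]
  have h_lim := integral_tendsto_of_tendsto_of_monotone hf h_int hf_mono hf_tendsto
  simp_rw [hf_integral] at h_lim
  have h_eq := tendsto_nhds_unique h_lim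
    (((hr_lim.log one_ne_zero).div_const 2).sub ((hr_lim.pow 2).div_const 4))
  rw [integral_neg, Real.log_one] at h_eq
  rw [mahlerH]
  linarith

lemma mahlerH_sub_eq_sub_norm (α : ℍ) :
    mahlerH (fun q => q - α) = mahlerH (fun q => q - (‖α‖ : ℍ)) := by
  obtain ⟨u, hu⟩ := exists_mem_sphere_mul_norm α
  rw [mahlerH, ← integral_mul_left_eq_self _ u, mahlerH]
  congr with q
  conv_lhs => rw [hu]
  rw [Metric.unitSphere.coe_mul, ← mul_sub, norm_mul, norm_eq_of_mem_sphere, one_mul]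

lemma mahlerH_sub_of_norm_le_one {α : ℍ} (hα : ‖α‖ ≤ 1) :
    mahlerH (fun q => q - α) = ‖α‖ ^ 2 / 4 := by
  rw [mahlerH_sub_eq_sub_norm]
  rcases hα.eq_or_lt with h | h
  · rw [h, Quaternion.coe_one, mahlerH_sub_one, one_pow]
  · exact mahlerH_sub_coe_of_abs_lt_one (by rwa [abs_norm])

lemma mahlerH_sub_eq_log_norm_add {α : ℍ} (h0 : α ≠ 0) (h1 : ‖α‖ ≠ 1) :
    mahlerH (fun q => q - α) = Real.log ‖α‖ + mahlerH (fun q => q - (star α)⁻¹) := by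
  have h_inv : ‖(star α)⁻¹‖ ≠ 1 := by rwa [norm_inv, norm_star, inv_ne_one]
  have h_log (q : Metric.sphere (0 : ℍ) 1) :
      Real.log ‖(q : ℍ) - α‖ = Real.log ‖α‖ + Real.log ‖(q : ℍ) - (star α)⁻¹‖ := by
    have hq := norm_eq_of_mem_sphere q
    rw [norm_sub_eq_norm_mul_norm_sub_inv_star hq h0, Real.log_mul (norm_ne_zero_iff.2 h0)]
    exact norm_ne_zero_iff.2 (sub_ne_zero.2 fun h => h_inv (h ▸ hq))
  simp_rw [mahlerH, h_log]
  rw [integral_add (integrable_const _) (integrable_log_norm_sub h_inv), integral_const,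
    probReal_univ, one_smul]

end MahlerMeasure

/-- Jensen formula for `m_ℍ(x - α)`. -/
theorem mahlerH_sub_const (α : Quaternion ℝ) :
    (‖α‖ ≤ 1 → mahlerH (fun q => q - α) = ‖α‖ ^ 2 / 4) ∧
    (1 < ‖α‖ → mahlerH (fun q => q - α) = 1 / (4 * ‖α‖ ^ 2) + Real.log ‖α‖) := by
  refine ⟨mahlerH_sub_of_norm_le_one, fun h => ?_⟩
  have hα : α ≠ 0 := norm_pos_iff.1 (one_pos.trans h)
  have h_inv : ‖(star α)⁻¹‖ = ‖α‖⁻¹ := by rw [norm_inv, norm_star]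
  rw [mahlerH_sub_eq_log_norm_add hα h.ne',
    mahlerH_sub_of_norm_le_one (h_inv.trans_le (inv_le_one_of_one_le₀ h.le)), h_inv]
  ring
end

section
/- Let α ∈ ℍ be nonzero and set φ = arccos(Re α/|α|), so that |α|² cos 2φ = 2(Re α)² − |α|². Then the quaternionic Mahler measure of q ↦ q² − 2(Re α)q + |α|² equals (1/2)|α|² cos 2φ if |α| ≤ 1, and equals (1/2)|α|^{−2} cos 2φ + 2 log|α| if |α| > 1. -/
open MeasureTheory Quaternion

/-!
Differentiating `∫ Φ (exp (t v) q) dμ`, which is constant in `t` by invariance of the Haar measure,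
along the directions `v = i, j, k` gives `∫ (1 - x²) g'(x) - 3 x g(x) dμ = 0` for functions `g` of
`x = Re q`. With `g = Uₙ'` this is the Chebyshev differential equation in integrated form, so `Uₙ`
has integral `0` for `n ≥ 1`, and `∫ Tₙ(Re q) dμ` is nonzero only for `n = 0` and `n = 2`.

On unit quaternions `|q² - 2 (Re α) q + |α|²|²` is a function of `Re q`. With `r = |α| < 1`,
`Re α = r cos φ` and `Re q = cos θ` it equals
`(1 - 2 r cos (φ - θ) + r²) (1 - 2 r cos (φ + θ) + r²)`. The power series of the logarithm turns
its log into a Chebyshev series in `Re q`, of which only the term `n = 2` survives integration.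
After division by `r²` the expression depends on `r` only through `r + r⁻¹`, and monotonically: the
symmetry `r ↦ r⁻¹` reduces `r > 1` to `r < 1`, and monotone convergence as `r ↑ 1` settles `r = 1`,
where the logarithm may be unbounded.
-/

open Filter Topology Set Polynomial.Chebyshev

section MonotoneConvergence

variable {X : Type*} {mX : MeasurableSpace X} {μ : Measure X} {f : ℕ → X → ℝ} {C : ℝ}

theorem lintegral_iSup_ofReal_sub_lt_top_of_antitone (hf : ∀ n, Integrable (f n) μ)
    (hanti : ∀ᵐ x ∂μ, Antitone (f · x)) (hC : ∀ n, C ≤ ∫ x, f n x ∂μ) :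
    ∫⁻ x, ⨆ n, ENNReal.ofReal (f 0 x - f n x) ∂μ < ⊤ := by
  have hint (n : ℕ) : Integrable (fun x => f 0 x - f n x) μ := (hf 0).sub (hf n)
  rw [lintegral_iSup' fun n => (hint n).aemeasurable.ennreal_ofReal]
  · refine (iSup_le fun n => ?_).trans_lt
      (ENNReal.ofReal_lt_top (r := ∫ x, f 0 x ∂μ - C))
    rw [← ofReal_integral_eq_lintegral_ofReal (hint n), integral_sub (hf 0) (hf n)]
    · exact ENNReal.ofReal_le_ofReal (sub_le_sub_left (hC n) _)
    · filter_upwards [hanti] with x hx using sub_nonneg.mpr (hx n.zero_le)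
  · filter_upwards [hanti] with x hx m n hmn
    exact ENNReal.ofReal_le_ofReal (sub_le_sub_left (hx hmn) _)

theorem ae_bddBelow_range_of_antitone_of_le_integral (hf : ∀ n, Integrable (f n) μ)
    (hanti : ∀ᵐ x ∂μ, Antitone (f · x)) (hC : ∀ n, C ≤ ∫ x, f n x ∂μ) :
    ∀ᵐ x ∂μ, BddBelow (range (f · x)) := by
  have hmeas : AEMeasurable (fun x => ⨆ n, ENNReal.ofReal (f 0 x - f n x)) μ :=
    .iSup fun n => ((hf 0).sub (hf n)).aemeasurable.ennreal_ofReal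
  filter_upwards [ae_lt_top' hmeas
    (lintegral_iSup_ofReal_sub_lt_top_of_antitone hf hanti hC).ne] with x hx
  refine ⟨f 0 x - (⨆ n, ENNReal.ofReal (f 0 x - f n x)).toReal, ?_⟩
  rintro _ ⟨n, rfl⟩
  have hn := (ENNReal.ofReal_le_iff_le_toReal hx.ne).mp
    (le_iSup (fun n => ENNReal.ofReal (f 0 x - f n x)) n)
  dsimp only
  linarith

theorem integrable_of_tendsto_of_antitone {F : X → ℝ} (hf : ∀ n, Integrable (f n) μ)
    (hanti : ∀ᵐ x ∂μ, Antitone (f · x)) (hC : ∀ n, C ≤ ∫ x, f n x ∂μ)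
    (hlim : ∀ᵐ x ∂μ, Tendsto (f · x) atTop (𝓝 (F x))) : Integrable F μ := by
  have hF : AEStronglyMeasurable F μ :=
    aestronglyMeasurable_of_tendsto_ae _ (fun n => (hf n).aestronglyMeasurable) hlim
  suffices hsub : Integrable (f 0 - F) μ by simpa using (hf 0).sub hsub
  refine ⟨(hf 0).aestronglyMeasurable.sub hF, ?_⟩
  rw [hasFiniteIntegral_iff_ofReal]
  · refine (lintegral_mono_ae ?_).trans_lt
      (lintegral_iSup_ofReal_sub_lt_top_of_antitone hf hanti hC)
    filter_upwards [hlim] with x hx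
    exact le_of_tendsto' (ENNReal.tendsto_ofReal (hx.const_sub _))
      fun n => le_iSup (fun n => ENNReal.ofReal (f 0 x - f n x)) n
  · filter_upwards [hlim, hanti] with x hx hx'
    exact sub_nonneg.mpr (hx'.le_of_tendsto hx 0)

end MonotoneConvergence

theorem hasDerivAt_integral_of_continuous_of_compactSpace {X E : Type*} [TopologicalSpace X]
    [CompactSpace X] [MeasurableSpace X] [OpensMeasurableSpace X] [NormedAddCommGroup E]
    [NormedSpace ℝ E] (μ : Measure X) [IsFiniteMeasure μ]
    {F F' : ℝ → X → E} (hF : ∀ t, Continuous (F t)) (hF' : Continuous (Function.uncurry F'))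
    (hderiv : ∀ t x, HasDerivAt (F · x) (F' t x) t) (t₀ : ℝ) :
    HasDerivAt (fun t => ∫ x, F t x ∂μ) (∫ x, F' t₀ x ∂μ) t₀ := by
  obtain ⟨C, hC⟩ := ((isCompact_closedBall t₀ 1).prod (isCompact_univ (X := X))
    ).exists_bound_of_continuousOn hF'.continuousOn
  have hF'₀ : Continuous (F' t₀) := hF'.comp (Continuous.prodMk_right t₀)
  exact (hasDerivAt_integral_of_dominated_loc_of_deriv_le (bound := fun _ => C)
    (Metric.closedBall_mem_nhds t₀ one_pos)
    (.of_forall fun t => (hF t).aestronglyMeasurable_of_compactSpace)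
    ((hF t₀).integrable_of_hasCompactSupport (.of_compactSpace _))
    (hF'₀.aestronglyMeasurable_of_compactSpace)
    (.of_forall fun x t ht => hC (t, x) ⟨ht, trivial⟩) (integrable_const C)
    (.of_forall fun x t _ => hderiv t x)).2

section UnitQuaternion

local notation "𝕊³" => Metric.sphere (0 : ℍ[ℝ]) 1

theorem abs_quaternion_re_le_norm (q : ℍ[ℝ]) : |q.re| ≤ ‖q‖ := by
  simpa [Quaternion.inner_def] using abs_real_inner_le_norm q 1

theorem continuous_re_coe_sphere : Continuous fun q : 𝕊³ => q.1.re :=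
  Quaternion.continuous_re.comp continuous_subtype_val

theorem re_sq_add_imI_sq_add_imJ_sq_add_imK_sq_of_mem_sphere (q : 𝕊³) :
    q.1.re ^ 2 + q.1.imI ^ 2 + q.1.imJ ^ 2 + q.1.imK ^ 2 = 1 := by
  rw [← Quaternion.normSq_def', Quaternion.normSq_eq_norm_mul_self, norm_eq_of_mem_sphere, mul_one]

theorem re_mem_Icc_of_mem_sphere (q : 𝕊³) : q.1.re ∈ Icc (-1 : ℝ) 1 :=
  abs_le.mp <| (abs_quaternion_re_le_norm q.1).trans_eq (norm_eq_of_mem_sphere q)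

variable (μ : Measure 𝕊³)

theorem integral_fderiv_mul_left_eq_zero [IsFiniteMeasure μ] [μ.IsMulLeftInvariant]
    {E : Type*} [NormedAddCommGroup E] [NormedSpace ℝ E] {Φ : ℍ[ℝ] → E} (hΦ : ContDiff ℝ 1 Φ)
    {v : ℍ[ℝ]} (hv : v.re = 0) :
    ∫ q : 𝕊³, fderiv ℝ Φ q (v * q) ∂μ = 0 := by
  let u (t : ℝ) : 𝕊³ := ⟨NormedSpace.exp (t • v), by simp [Quaternion.norm_exp, hv]⟩
  have hu (t : ℝ) (q : ℍ[ℝ]) : HasDerivAt (fun t => (u t : ℍ[ℝ]) * q) (v * u t * q) t :=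
    (hasDerivAt_exp_smul_const' v t).mul_const q
  have hderiv := hasDerivAt_integral_of_continuous_of_compactSpace μ
    (F := fun t q => Φ (u t * q)) (F' := fun t q => fderiv ℝ Φ (u t * q) (v * u t * q))
    (fun t => hΦ.continuous.comp (by fun_prop))
    (by
      have hexp : Continuous fun t : ℝ => NormedSpace.exp (t • v) :=
        continuous_iff_continuousAt.mpr fun t => (hasDerivAt_exp_smul_const' v t).continuousAt
      exact ((hΦ.continuous_fderiv one_ne_zero).comp (by fun_prop)).clm_apply (by fun_prop))
    (fun t q => ((hΦ.differentiable one_ne_zero _).hasFDerivAt.comp_hasDerivAt t (hu t q))) 0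
  have hconst : (fun t => ∫ q : 𝕊³, Φ (u t * q) ∂μ) = fun _ => ∫ q : 𝕊³, Φ q ∂μ :=
    funext fun t => integral_mul_left_eq_self (fun q : 𝕊³ => Φ q) (u t)
  rw [hconst] at hderiv
  simpa [u] using hderiv.unique (hasDerivAt_const _ _)

theorem integral_deriv_re_mul_sq_eq [IsFiniteMeasure μ] [μ.IsMulLeftInvariant] {g : ℝ → ℝ}
    (hg : ContDiff ℝ 1 g) {v : ℍ[ℝ]} (hv : v.re = 0) (hvv : v * v = -1) :
    ∫ q : 𝕊³, (v * q.1).re ^ 2 * deriv g q.1.re ∂μ = ∫ q : 𝕊³, q.1.re * g q.1.re ∂μ := by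
  let reL : ℍ[ℝ] →L[ℝ] ℝ :=
    { toLinearMap := QuaternionAlgebra.reₗ (-1) 0 (-1), cont := Quaternion.continuous_re }
  have hreL (q : ℍ[ℝ]) : reL q = q.re := rfl
  have hgre : Continuous fun q : 𝕊³ => g q.1.re := hg.continuous.comp continuous_re_coe_sphere
  have hg're : Continuous fun q : 𝕊³ => deriv g q.1.re :=
    (hg.continuous_deriv le_rfl).comp continuous_re_coe_sphere
  have hvq : Continuous fun q : 𝕊³ => (v * q.1).re := Quaternion.continuous_re.comp (by fun_prop)
  have hΦ (q : ℍ[ℝ]) : fderiv ℝ (fun q => g (reL q) * reL (v * q)) q (v * q) =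
      (v * q).re ^ 2 * deriv g q.re - q.re * g q.re := by
    have hgq := (hg.differentiable one_ne_zero _).hasDerivAt.comp_hasFDerivAt q reL.hasFDerivAt
    have hvq := (reL ∘L ContinuousLinearMap.mul ℝ ℍ[ℝ] v).hasFDerivAt (x := q)
    have hsq : (v * (v * q)).re = -q.re := by rw [← mul_assoc, hvv, neg_one_mul, Quaternion.re_neg]
    refine (congrArg (· (v * q)) (hgq.mul hvq).fderiv).trans ?_
    simp only [Function.comp_apply, hreL, ContinuousLinearMap.comp_apply,
      ContinuousLinearMap.mul_apply', add_apply, smul_apply, smul_eq_mul, hsq]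
    ring
  have hzero := integral_fderiv_mul_left_eq_zero μ
    (Φ := fun q => g (reL q) * reL (v * q)) (by fun_prop) hv
  simp only [hΦ] at hzero
  have hint : Integrable (fun q : 𝕊³ => (v * q.1).re ^ 2 * deriv g q.1.re) μ :=
    ((hvq.pow 2).mul hg're).integrable_of_hasCompactSupport (.of_compactSpace _)
  have hint' : Integrable (fun q : 𝕊³ => q.1.re * g q.1.re) μ :=
    (continuous_re_coe_sphere.mul hgre).integrable_of_hasCompactSupport (.of_compactSpace _)
  exact sub_eq_zero.mp ((integral_sub hint hint').symm.trans hzero)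

theorem integral_one_sub_re_sq_mul_deriv [IsFiniteMeasure μ] [μ.IsMulLeftInvariant] {g : ℝ → ℝ}
    (hg : ContDiff ℝ 1 g) :
    ∫ q : 𝕊³, (1 - q.1.re ^ 2) * deriv g q.1.re ∂μ = 3 * ∫ q : 𝕊³, q.1.re * g q.1.re ∂μ := by
  let e : Fin 3 → ℍ[ℝ] := ![⟨0, 1, 0, 0⟩, ⟨0, 0, 1, 0⟩, ⟨0, 0, 0, 1⟩]
  have hre (i : Fin 3) : (e i).re = 0 := by fin_cases i <;> rfl
  have hsq (i : Fin 3) : e i * e i = -1 := by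
    fin_cases i <;> exact (QuaternionAlgebra.mk_mul_mk ..).trans (by ext <;> simp)
  have hsum (q : 𝕊³) : 1 - q.1.re ^ 2 = ∑ i, (e i * q.1).re ^ 2 := by
    simp only [Fin.sum_univ_three, Quaternion.re_mul]
    simp only [e, Fin.isValue, Matrix.cons_val, zero_mul, one_mul, zero_sub, sub_zero, even_two,
      Even.neg_pow, sub_self]
    linear_combination -re_sq_add_imI_sq_add_imJ_sq_add_imK_sq_of_mem_sphere q
  have hint (i : Fin 3) : Integrable (fun q : 𝕊³ => (e i * q.1).re ^ 2 * deriv g q.1.re) μ :=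
    (((Quaternion.continuous_re.comp (by fun_prop)).pow 2).mul
      ((hg.continuous_deriv le_rfl).comp continuous_re_coe_sphere)).integrable_of_hasCompactSupport
      (.of_compactSpace _)
  calc ∫ q : 𝕊³, (1 - q.1.re ^ 2) * deriv g q.1.re ∂μ
      = ∫ q : 𝕊³, ∑ i, (e i * q.1).re ^ 2 * deriv g q.1.re ∂μ := by
        simp only [hsum, Finset.sum_mul]
    _ = ∑ i, ∫ q : 𝕊³, (e i * q.1).re ^ 2 * deriv g q.1.re ∂μ :=
        integral_finsetSum _ fun i _ => hint i
    _ = ∑ _i : Fin 3, ∫ q : 𝕊³, q.1.re * g q.1.re ∂μ :=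
        Finset.sum_congr rfl fun i _ => integral_deriv_re_mul_sq_eq μ hg (hre i) (hsq i)
    _ = 3 * ∫ q : 𝕊³, q.1.re * g q.1.re ∂μ := by simp

theorem integral_eval_U_re_of_ne [IsFiniteMeasure μ] [μ.IsMulLeftInvariant] {n : ℤ}
    (hn : n ≠ 0) (hn' : n ≠ -2) :
    ∫ q : 𝕊³, (U ℝ n).eval q.1.re ∂μ = 0 := by
  have hre := continuous_re_coe_sphere
  have hode (x : ℝ) : (n + 2) * n * (U ℝ n).eval x = 3 * (x * (U ℝ n).derivative.eval x) -
      (1 - x ^ 2) * deriv (fun x => (U ℝ n).derivative.eval x) x := by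
    have := congrArg (Polynomial.eval x)
      (one_sub_X_sq_mul_derivative_derivative_U_eq_poly_in_U (R := ℝ) n)
    simp only [Function.iterate_succ_apply, Function.iterate_zero_apply,
      Polynomial.eval_mul, Polynomial.eval_sub, Polynomial.eval_one, Polynomial.eval_pow,
      Polynomial.eval_X, Polynomial.eval_ofNat, Polynomial.eval_add, Polynomial.eval_intCast,
      Polynomial.deriv] at this ⊢
    linarith
  have hparts := integral_one_sub_re_sq_mul_deriv μ
    (g := fun x => (U ℝ n).derivative.eval x)
    ((U ℝ n).derivative.contDiff_aeval 1)
  have hzero : (n + 2 : ℝ) * n * ∫ q : 𝕊³, (U ℝ n).eval q.1.re ∂μ = 0 := by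
    simp only [← integral_const_mul, hode]
    simp only [Polynomial.deriv] at hparts ⊢
    rw [integral_sub, integral_const_mul, hparts, sub_self] <;>
      exact Continuous.integrable_of_hasCompactSupport (by fun_prop) (.of_compactSpace _)
  refine (mul_eq_zero.mp hzero).resolve_left (mul_ne_zero ?_ (mod_cast hn))
  exact_mod_cast fun h => hn' (by omega)

theorem integral_eval_T_re [IsProbabilityMeasure μ] [μ.IsMulLeftInvariant] (n : ℕ) :
    ∫ q : 𝕊³, (T ℝ n).eval q.1.re ∂μ = if n = 0 then 1 else if n = 2 then -1 / 2 else 0 := by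
  have hre := continuous_re_coe_sphere
  have hT (x : ℝ) : (T ℝ n).eval x = ((U ℝ n).eval x - (U ℝ (n - 2)).eval x) / 2 := by
    have := congrArg (Polynomial.eval x) (two_mul_T_eq_U_sub_U ℝ (n - 2))
    simp only [sub_add_cancel, Polynomial.eval_mul, Polynomial.eval_ofNat,
      Polynomial.eval_sub] at this
    linarith
  split_ifs with h0 h2
  · simp [h0]
  all_goals
    simp only [hT, integral_div]
    rw [integral_sub, integral_eval_U_re_of_ne μ (n := n) (by omega) (by omega)]
  all_goals try exact Continuous.integrable_of_hasCompactSupport (by fun_prop) (.of_compactSpace _)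
  · simp [h2]
  · rw [integral_eval_U_re_of_ne μ (by omega) (by omega)]
    simp

theorem integral_comp_re_of_hasSum_T [IsProbabilityMeasure μ] [μ.IsMulLeftInvariant]
    {a : ℕ → ℝ} {f : ℝ → ℝ} (ha : Summable fun n => |a n|)
    (hf : ∀ x ∈ Icc (-1 : ℝ) 1, HasSum (fun n => a n * (T ℝ n).eval x) (f x)) :
    ∫ q : 𝕊³, f q.1.re ∂μ = a 0 - a 2 / 2 := by
  have hre := continuous_re_coe_sphere
  have hsum : HasSum (fun n => ∫ q : 𝕊³, a n * (T ℝ n).eval q.1.re ∂μ)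
      (∫ q : 𝕊³, f q.1.re ∂μ) := by
    refine hasSum_integral_of_dominated_convergence (fun n _ => |a n|)
      (fun n => Continuous.aestronglyMeasurable (by fun_prop)) (fun n => .of_forall fun q => ?_)
      (.of_forall fun _ => ha) (integrable_const _)
      (.of_forall fun q => hf _ (re_mem_Icc_of_mem_sphere q))
    rw [Real.norm_eq_abs, abs_mul]
    exact mul_le_of_le_one_right (abs_nonneg _)
      (abs_eval_T_real_le_one n (abs_le.mpr (re_mem_Icc_of_mem_sphere q)))
  simp only [integral_const_mul, integral_eval_T_re] at hsum
  refine hsum.unique ?_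
  convert hasSum_sum_of_ne_finset_zero (L := .unconditional ℕ) (s := {0, 2}) fun n hn => ?_ using 1
  · rw [Finset.sum_pair (by decide)]
    simp only [↓reduceIte, OfNat.ofNat_ne_zero, mul_one]
    ring
  · simp only [Finset.mem_insert, Finset.mem_singleton, not_or] at hn
    simp [hn]

-- The sum starts at `n = 1`: the term at `n = 0` is `1 / 0 = 0`.
theorem hasSum_log_one_sub_polar {r : ℝ} (hr : |r| < 1) (θ : ℝ) :
    HasSum (fun n : ℕ => r ^ n * Real.cos (n * θ) / n)
      (-(Real.log (1 - 2 * r * Real.cos θ + r ^ 2) / 2)) := by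
  have hz : ‖(r : ℂ) * Complex.exp (θ * Complex.I)‖ < 1 := by
    simpa [Complex.norm_exp_ofReal_mul_I] using hr
  have hnorm : ‖1 - (r : ℂ) * Complex.exp (θ * Complex.I)‖ ^ 2 =
      1 - 2 * r * Real.cos θ + r ^ 2 := by
    rw [← Complex.normSq_eq_norm_sq, Complex.normSq_apply]
    simp only [Complex.sub_re, Complex.one_re, Complex.re_ofReal_mul, Complex.exp_ofReal_mul_I_re,
      Complex.sub_im, Complex.one_im, Complex.im_ofReal_mul, Complex.exp_ofReal_mul_I_im]
    linear_combination r ^ 2 * Real.sin_sq_add_cos_sq θ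
  rw [← hnorm, Real.log_pow]
  convert Complex.hasSum_re (Complex.hasSum_taylorSeries_neg_log hz) using 1
  · funext n
    rw [mul_pow, ← Complex.exp_nat_mul, ← mul_assoc, Complex.div_natCast_re, ← Complex.ofReal_pow,
      Complex.re_ofReal_mul, ← Complex.ofReal_natCast, ← Complex.ofReal_mul,
      Complex.exp_ofReal_mul_I_re]
  · rw [Complex.neg_re, Complex.log_re]
    push_cast
    ring

theorem tendsto_log_of_bddBelow_range {u : ℕ → ℝ} {l : ℝ} (hu : Tendsto u atTop (𝓝 l))
    (hpos : ∀ n, 0 < u n) (hbdd : BddBelow (range fun n => Real.log (u n))) :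
    Tendsto (fun n => Real.log (u n)) atTop (𝓝 (Real.log l)) := by
  refine hu.log fun hl => ?_
  have hbot := Real.tendsto_log_nhdsGT_zero.comp
    (tendsto_nhdsWithin_iff.mpr ⟨hl ▸ hu, .of_forall hpos⟩)
  exact not_bddBelow_of_tendsto_atBot hbot hbdd

theorem strictAntiOn_add_inv : StrictAntiOn (fun r : ℝ => r + r⁻¹) (Ioc 0 1) := by
  intro a ha b hb hab
  have hab1 : 1 < (a * b)⁻¹ :=
    (one_lt_inv₀ (mul_pos ha.1 hb.1)).mpr (mul_lt_one_of_nonneg_of_lt_one_left ha.1.le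
      (hab.trans_le hb.2) hb.2)
  have hfactor : a + a⁻¹ - (b + b⁻¹) = (b - a) * ((a * b)⁻¹ - 1) := by
    have := ha.1.ne'
    have := hb.1.ne'
    field_simp
    ring
  exact sub_pos.mp (hfactor ▸ mul_pos (sub_pos.mpr hab) (sub_pos.mpr hab1))

theorem two_lt_add_inv {r : ℝ} (hr : 0 < r) (hr1 : r ≠ 1) : 2 < r + r⁻¹ := by
  field_simp
  nlinarith [sq_pos_of_ne_zero (sub_ne_zero.mpr hr1)]

/-- The value of `‖q ^ 2 - 2 * (r * c) * q + r ^ 2‖ ^ 2 / r ^ 2` at a unit quaternion `q` with real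
part `x`, where `s = r + r⁻¹`. In this normalization it is invariant under `r ↦ r⁻¹` and, for `c`
and `x` in `[-1, 1]`, increasing in `s ≥ 2`. -/
def normalizedNormSq (s c x : ℝ) : ℝ := (s * x - 2 * c) ^ 2 + (s ^ 2 - 4) * (1 - x ^ 2)

theorem normalizedNormSq_cos_cos (s φ θ : ℝ) :
    normalizedNormSq s (Real.cos φ) (Real.cos θ) =
      (s - 2 * Real.cos (φ - θ)) * (s - 2 * Real.cos (φ + θ)) := by
  rw [normalizedNormSq, Real.cos_sub, Real.cos_add]
  linear_combination 4 * (1 - Real.cos θ ^ 2) * Real.sin_sq_add_cos_sq φ +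
    4 * Real.sin φ ^ 2 * Real.sin_sq_add_cos_sq θ

theorem sub_two_mul_cos_nonneg {s : ℝ} (hs : 2 ≤ s) (t : ℝ) : 0 ≤ s - 2 * Real.cos t := by
  linarith [Real.cos_le_one t]

theorem sub_two_mul_cos_pos {s : ℝ} (hs : 2 < s) (t : ℝ) : 0 < s - 2 * Real.cos t := by
  linarith [Real.cos_le_one t]

theorem normalizedNormSq_pos {s : ℝ} (hs : 2 < s) (φ : ℝ) {x : ℝ} (hx : x ∈ Icc (-1 : ℝ) 1) :
    0 < normalizedNormSq s (Real.cos φ) x := by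
  obtain ⟨θ, rfl⟩ : ∃ θ, Real.cos θ = x := ⟨_, Real.cos_arccos hx.1 hx.2⟩
  rw [normalizedNormSq_cos_cos]
  exact mul_pos (sub_two_mul_cos_pos hs _) (sub_two_mul_cos_pos hs _)

theorem monotoneOn_normalizedNormSq (φ : ℝ) {x : ℝ} (hx : x ∈ Icc (-1 : ℝ) 1) :
    MonotoneOn (normalizedNormSq · (Real.cos φ) x) (Ici 2) := by
  obtain ⟨θ, rfl⟩ : ∃ θ, Real.cos θ = x := ⟨_, Real.cos_arccos hx.1 hx.2⟩
  intro s hs t ht hst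
  simp only [normalizedNormSq_cos_cos]
  exact mul_le_mul (sub_le_sub_right hst _) (sub_le_sub_right hst _)
    (sub_two_mul_cos_nonneg hs _) (sub_two_mul_cos_nonneg ht _)

theorem antitoneOn_log_normalizedNormSq_add_inv (φ : ℝ) {x : ℝ} (hx : x ∈ Icc (-1 : ℝ) 1) :
    AntitoneOn (fun r => Real.log (normalizedNormSq (r + r⁻¹) (Real.cos φ) x)) (Ioo 0 1) := by
  intro r hr t ht hrt
  have hr2 := two_lt_add_inv hr.1 hr.2.ne
  have ht2 := two_lt_add_inv ht.1 ht.2.ne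
  exact Real.log_le_log (normalizedNormSq_pos ht2 φ hx) <|
    monotoneOn_normalizedNormSq φ hx ht2.le hr2.le <| strictAntiOn_add_inv.antitoneOn
      (Ioo_subset_Ioc_self hr) (Ioo_subset_Ioc_self ht) hrt

theorem tendsto_normalizedNormSq_add_inv (c x : ℝ) :
    Tendsto (fun r => normalizedNormSq (r + r⁻¹) c x) (𝓝 1) (𝓝 (normalizedNormSq 2 c x)) := by
  have hs : Tendsto (fun r : ℝ => r + r⁻¹) (𝓝 1) (𝓝 2) := by
    simpa [one_add_one_eq_two] using tendsto_id.add (tendsto_inv₀ (one_ne_zero (α := ℝ)))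
  have hcont : Continuous fun s => normalizedNormSq s c x := by
    unfold normalizedNormSq
    fun_prop
  exact (hcont.tendsto 2).comp hs

theorem hasSum_log_normalizedNormSq_add_inv {r : ℝ} (hr : 0 < r) (hr1 : r < 1) (φ : ℝ) {x : ℝ}
    (hx : x ∈ Icc (-1 : ℝ) 1) :
    HasSum (fun n : ℕ => -(4 * r ^ n * Real.cos (n * φ) / n) * (T ℝ n).eval x)
      (Real.log (normalizedNormSq (r + r⁻¹) (Real.cos φ) x) + 2 * Real.log r) := by
  obtain ⟨θ, rfl⟩ : ∃ θ, Real.cos θ = x := ⟨_, Real.cos_arccos hx.1 hx.2⟩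
  have hpos (t : ℝ) := sub_two_mul_cos_pos (two_lt_add_inv hr hr1.ne) t
  have hlog (t : ℝ) : Real.log (1 - 2 * r * Real.cos t + r ^ 2) =
      Real.log (r + r⁻¹ - 2 * Real.cos t) + Real.log r := by
    rw [← Real.log_mul (hpos t).ne' hr.ne']
    congr 1
    field_simp
    ring
  have hval : Real.log (normalizedNormSq (r + r⁻¹) (Real.cos φ) (Real.cos θ)) + 2 * Real.log r =
      -2 * (-(Real.log (1 - 2 * r * Real.cos (φ - θ) + r ^ 2) / 2) +
        -(Real.log (1 - 2 * r * Real.cos (φ + θ) + r ^ 2) / 2)) := by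
    rw [hlog, hlog, normalizedNormSq_cos_cos, Real.log_mul (hpos _).ne' (hpos _).ne']
    ring
  have hterm (n : ℕ) : -(4 * r ^ n * Real.cos (n * φ) / n) * (T ℝ n).eval (Real.cos θ) =
      -2 * (r ^ n * Real.cos (n * (φ - θ)) / n + r ^ n * Real.cos (n * (φ + θ)) / n) := by
    rw [T_real_cos, mul_sub (n : ℝ), mul_add (n : ℝ), Real.cos_sub, Real.cos_add, Int.cast_natCast]
    ring
  have hr' : |r| < 1 := by rwa [abs_of_pos hr]
  simp only [hval, hterm]
  exact ((hasSum_log_one_sub_polar hr' _).add (hasSum_log_one_sub_polar hr' _)).mul_left (-2)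

theorem integrable_log_normalizedNormSq_re [IsFiniteMeasure μ] {s : ℝ} (hs : 2 < s) (φ : ℝ) :
    Integrable (fun q : 𝕊³ => Real.log (normalizedNormSq s (Real.cos φ) q.1.re)) μ := by
  have hre := continuous_re_coe_sphere
  refine Continuous.integrable_of_hasCompactSupport (.log ?_ fun q =>
    (normalizedNormSq_pos hs φ (re_mem_Icc_of_mem_sphere q)).ne') (.of_compactSpace _)
  unfold normalizedNormSq
  fun_prop

theorem integral_log_normalizedNormSq_add_inv_of_lt_one
    [IsProbabilityMeasure μ] [μ.IsMulLeftInvariant] {r : ℝ}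
    (hr : 0 < r) (hr1 : r < 1) (φ : ℝ) :
    ∫ q : 𝕊³, Real.log (normalizedNormSq (r + r⁻¹) (Real.cos φ) q.1.re) ∂μ =
      r ^ 2 * Real.cos (2 * φ) - 2 * Real.log r := by
  have hsummable : Summable fun n : ℕ => |-(4 * r ^ n * Real.cos (n * φ) / n)| := by
    refine .of_nonneg_of_le (fun _ => abs_nonneg _) (fun n => ?_)
      ((summable_geometric_of_lt_one hr.le hr1).mul_left 4)
    rw [abs_neg, div_eq_mul_inv, abs_mul, abs_mul, abs_of_nonneg (a := 4 * r ^ n) (by positivity),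
      abs_of_nonneg (a := (n : ℝ)⁻¹) (by positivity)]
    calc 4 * r ^ n * |Real.cos (n * φ)| * (n : ℝ)⁻¹
        ≤ 4 * r ^ n * 1 * 1 := by
          gcongr
          exacts [Real.abs_cos_le_one _, Nat.cast_inv_le_one n]
      _ = 4 * r ^ n := by ring
  have hint := integral_comp_re_of_hasSum_T μ hsummable
    fun x hx => hasSum_log_normalizedNormSq_add_inv hr hr1 φ hx
  rw [integral_add (integrable_log_normalizedNormSq_re μ (two_lt_add_inv hr hr1.ne) φ)
    (integrable_const _)] at hint
  simp only [integral_const, probReal_univ, smul_eq_mul, one_mul, pow_zero, mul_one,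
    Nat.cast_zero, zero_mul, Real.cos_zero, div_zero, neg_zero, Nat.cast_ofNat, zero_sub] at hint
  linarith

theorem integrable_and_integral_log_normalizedNormSq_two
    [IsProbabilityMeasure μ] [μ.IsMulLeftInvariant] (φ : ℝ) :
    Integrable (fun q : 𝕊³ => Real.log (normalizedNormSq 2 (Real.cos φ) q.1.re)) μ ∧
      ∫ q : 𝕊³, Real.log (normalizedNormSq 2 (Real.cos φ) q.1.re) ∂μ = Real.cos (2 * φ) := by
  obtain ⟨r, hmono, hr, hlim⟩ := exists_seq_strictMono_tendsto' (zero_lt_one (α := ℝ))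
  let f (n : ℕ) (q : 𝕊³) : ℝ := Real.log (normalizedNormSq (r n + (r n)⁻¹) (Real.cos φ) q.1.re)
  have hs (n : ℕ) : 2 < r n + (r n)⁻¹ := two_lt_add_inv (hr n).1 (hr n).2.ne
  have hf (n : ℕ) : Integrable (f n) μ := integrable_log_normalizedNormSq_re μ (hs n) φ
  have hanti : ∀ᵐ q ∂μ, Antitone (f · q) := .of_forall fun q m n hmn =>
    antitoneOn_log_normalizedNormSq_add_inv φ (re_mem_Icc_of_mem_sphere q) (hr m) (hr n)
      (hmono.monotone hmn)
  have hval (n : ℕ) : ∫ q, f n q ∂μ = r n ^ 2 * Real.cos (2 * φ) - 2 * Real.log (r n) :=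
    integral_log_normalizedNormSq_add_inv_of_lt_one μ (hr n).1 (hr n).2 φ
  have hbound (n : ℕ) : -1 ≤ ∫ q, f n q ∂μ := by
    rw [hval]
    nlinarith [Real.log_neg (hr n).1 (hr n).2, Real.neg_one_le_cos (2 * φ),
      pow_le_one₀ (n := 2) (hr n).1.le (hr n).2.le, sq_nonneg (r n)]
  have hflim : ∀ᵐ q ∂μ, Tendsto (f · q) atTop
      (𝓝 (Real.log (normalizedNormSq 2 (Real.cos φ) q.1.re))) := by
    filter_upwards [ae_bddBelow_range_of_antitone_of_le_integral hf hanti hbound] with q hq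
    exact tendsto_log_of_bddBelow_range ((tendsto_normalizedNormSq_add_inv _ _).comp hlim)
      (fun n => normalizedNormSq_pos (hs n) φ (re_mem_Icc_of_mem_sphere q)) hq
  have hint := integrable_of_tendsto_of_antitone hf hanti hbound hflim
  refine ⟨hint, tendsto_nhds_unique
    (integral_tendsto_of_tendsto_of_antitone hf hint hanti hflim) ?_⟩
  simp only [hval]
  convert ((hlim.pow 2).mul_const (Real.cos (2 * φ))).sub ((hlim.log one_ne_zero).const_mul 2)
    using 2
  simp

theorem integrable_and_integral_log_normalizedNormSq_add_inv
    [IsProbabilityMeasure μ] [μ.IsMulLeftInvariant] {r : ℝ}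
    (hr : 0 < r) (hr1 : r ≤ 1) (φ : ℝ) :
    Integrable (fun q : 𝕊³ => Real.log (normalizedNormSq (r + r⁻¹) (Real.cos φ) q.1.re)) μ ∧
      ∫ q : 𝕊³, Real.log (normalizedNormSq (r + r⁻¹) (Real.cos φ) q.1.re) ∂μ =
        r ^ 2 * Real.cos (2 * φ) - 2 * Real.log r := by
  rcases hr1.lt_or_eq with hr1 | rfl
  · exact ⟨integrable_log_normalizedNormSq_re μ (two_lt_add_inv hr hr1.ne) φ,
      integral_log_normalizedNormSq_add_inv_of_lt_one μ hr hr1 φ⟩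
  · simpa [one_add_one_eq_two] using integrable_and_integral_log_normalizedNormSq_two μ φ

theorem norm_quadratic_sq {r : ℝ} (hr : r ≠ 0) (c : ℝ) (q : 𝕊³) :
    ‖q.1 ^ 2 - ((2 * (r * c) : ℝ) : ℍ[ℝ]) * q.1 + ((r ^ 2 : ℝ) : ℍ[ℝ])‖ ^ 2 =
      r ^ 2 * normalizedNormSq (r + r⁻¹) c q.1.re := by
  have hq := re_sq_add_imI_sq_add_imJ_sq_add_imK_sq_of_mem_sphere q
  have hscale : r ^ 2 * normalizedNormSq (r + r⁻¹) c q.1.re =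
      ((1 + r ^ 2) * q.1.re - 2 * (r * c)) ^ 2 + (1 - r ^ 2) ^ 2 * (1 - q.1.re ^ 2) := by
    unfold normalizedNormSq
    field_simp
    ring
  rw [hscale, sq ‖_‖, ← Quaternion.normSq_eq_norm_mul_self, Quaternion.normSq_def']
  simp only [sq q.1, Quaternion.re_add, Quaternion.re_sub, Quaternion.re_mul, Quaternion.re_coe,
    Quaternion.imI_add, Quaternion.imI_sub, Quaternion.imI_mul, Quaternion.imI_coe,
    Quaternion.imJ_add, Quaternion.imJ_sub, Quaternion.imJ_mul, Quaternion.imJ_coe,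
    Quaternion.imK_add, Quaternion.imK_sub, Quaternion.imK_mul, Quaternion.imK_coe]
  linear_combination (4 * (q.1.re - r * c) ^ 2 -
    2 * (q.1.re ^ 2 - 2 * (r * c) * q.1.re + r ^ 2) +
    (q.1.imI ^ 2 + q.1.imJ ^ 2 + q.1.imK ^ 2) + (1 - q.1.re ^ 2)) * hq

theorem log_norm_quadratic {r : ℝ} (hr : 0 < r) (φ : ℝ) (q : 𝕊³) :
    Real.log ‖q.1 ^ 2 - ((2 * (r * Real.cos φ) : ℝ) : ℍ[ℝ]) * q.1 + ((r ^ 2 : ℝ) : ℍ[ℝ])‖ =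
      Real.log r + Real.log (normalizedNormSq (r + r⁻¹) (Real.cos φ) q.1.re) / 2 := by
  have hsq := congrArg Real.log (norm_quadratic_sq hr.ne' (Real.cos φ) q)
  rw [Real.log_pow] at hsq
  rcases eq_or_ne r 1 with rfl | hr1
  · simp only [Nat.cast_ofNat, one_pow, one_mul, Real.log_one, zero_add] at hsq ⊢
    linarith
  · rw [Real.log_mul (by positivity) (normalizedNormSq_pos (two_lt_add_inv hr hr1) φ
      (re_mem_Icc_of_mem_sphere q)).ne', Real.log_pow] at hsq
    simp only [Nat.cast_ofNat] at hsq
    linarith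

end UnitQuaternion

instance inst_s1 : IsProbabilityMeasure muH :=
  ⟨by simpa [muH] using Measure.haarMeasure_self (K₀ := (⊤ : TopologicalSpace.PositiveCompacts
    (Metric.sphere (0 : ℍ[ℝ]) 1)))⟩

instance : muH.IsMulLeftInvariant := by unfold muH; infer_instance

theorem mahlerH_quadratic_of_add_inv_eq {r ρ : ℝ} (hr : 0 < r) (hρ : 0 < ρ) (hρ1 : ρ ≤ 1)
    (hrρ : r + r⁻¹ = ρ + ρ⁻¹) (φ : ℝ) :
    mahlerH (fun q => q ^ 2 - ((2 * (r * Real.cos φ) : ℝ) : ℍ[ℝ]) * q + ((r ^ 2 : ℝ) : ℍ[ℝ])) =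
      Real.log r - Real.log ρ + ρ ^ 2 * Real.cos (2 * φ) / 2 := by
  obtain ⟨hint, hval⟩ := integrable_and_integral_log_normalizedNormSq_add_inv muH hρ hρ1 φ
  simp only [mahlerH, log_norm_quadratic hr, hrρ]
  rw [integral_add (integrable_const _) (hint.div_const 2), integral_div, hval]
  simp only [integral_const, probReal_univ, one_smul]
  ring

/-- Jensen formula for `m_ℍ(x² - 2(Re α)x + |α|²)`. -/
theorem mahlerH_quadratic (α : Quaternion ℝ) (hα : α ≠ 0) (φ : ℝ)
    (hφ : φ = Real.arccos (α.re / ‖α‖)) :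
    (‖α‖ ≤ 1 →
      mahlerH (fun q =>
          q ^ 2 - ((2 * α.re : ℝ) : Quaternion ℝ) * q + ((‖α‖ ^ 2 : ℝ) : Quaternion ℝ)) =
        ‖α‖ ^ 2 * Real.cos (2 * φ) / 2) ∧
    (1 < ‖α‖ →
      mahlerH (fun q =>
          q ^ 2 - ((2 * α.re : ℝ) : Quaternion ℝ) * q + ((‖α‖ ^ 2 : ℝ) : Quaternion ℝ)) =
        Real.cos (2 * φ) / (2 * ‖α‖ ^ 2) + 2 * Real.log ‖α‖) := by
  have hnorm : 0 < ‖α‖ := norm_pos_iff.mpr hα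
  have hcos : α.re = ‖α‖ * Real.cos φ := by
    have hre : |α.re / ‖α‖| ≤ 1 := by
      rw [abs_div, abs_norm]
      exact div_le_one_of_le₀ (abs_quaternion_re_le_norm α) hnorm.le
    rw [hφ, Real.cos_arccos (abs_le.mp hre).1 (abs_le.mp hre).2, mul_div_cancel₀ _ hnorm.ne']
  rw [hcos]
  refine ⟨fun hle => ?_, fun hlt => ?_⟩
  · rw [mahlerH_quadratic_of_add_inv_eq hnorm hnorm hle rfl]
    ring
  · rw [mahlerH_quadratic_of_add_inv_eq hnorm (inv_pos.mpr hnorm) (inv_le_one_of_one_le₀ hlt.le)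
      (by rw [inv_inv, add_comm]), Real.log_inv]
    ring
end

section
/- Let P(q) = Σ_{k=0}^n qᵏ aₖ (with aₖ ∈ ℍ, not all zero) be a nonzero slice regular quaternionic polynomial. Then the function q ↦ log|P(q)| is integrable on T¹(ℍ) with respect to the probability Haar measure μ; in particular the quaternionic Mahler measure m_ℍ(P) exists and is finite. -/
open MeasureTheory Quaternion

/-!
Write a quaternion as `q = z + w j` with `z w : ℂ`. On the orbit of `q` under left multiplication
by the unit circle of `ℂ`, the `ℂ`-component of `P (t⁻¹ q)`, multiplied by `t ^ n`, is the
restriction of a polynomial in `t`, whose value at `t = 0` is `z ^ n` when `P` is monic of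
degree `n`. Jensen's inequality then bounds the integral of `|log ‖P‖|` over the orbit in terms
of `|z|` alone, so by invariance of the Haar measure `log ‖P‖` is integrable where `|z| ≥ 1 / 2`.
Conjugation by a unit quaternion preserves the Haar measure and permutes the monic polynomials of
degree `n`, and the conjugates of this region under the powers of a Hurwitz unit cover the sphere.
-/

open Set Metric Real

theorem abs_log_le_of_le_of_le {x y S : ℝ} (hx : 0 < x) (hxy : x ≤ y) (hyS : y ≤ S) (hS : 1 ≤ S) :
    |log y| ≤ 2 * log S - log x := by
  have hlog_xy := log_le_log hx hxy
  have hlog_yS := log_le_log (hx.trans_le hxy) hyS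
  have hlog_S := log_nonneg hS
  exact abs_le.2 ⟨by linarith, by linarith⟩

theorem abs_log_mul_le (x y : ℝ) : |log (x * y)| ≤ |log x| + |log y| := by
  obtain rfl | hx := eq_or_ne x 0
  · simp
  obtain rfl | hy := eq_or_ne y 0
  · simp
  rw [log_mul hx hy]
  exact abs_add_le _ _

section Jensen

variable {c : ℂ} {R : ℝ} {f : ℂ → ℂ}

theorem log_norm_le_circleAverage_log_norm (hR : 0 < R) (hf : AnalyticOnNhd ℂ f (closedBall c R))
    (hc : f c ≠ 0) : log ‖f c‖ ≤ circleAverage (log ‖f ·‖) c R := by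
  rw [← abs_of_pos hR] at hf
  rw [hf.circleAverage_log_norm hR.ne' hc]
  refine le_add_of_nonneg_left (finsum_nonneg fun u => ?_)
  by_cases hu : u ∈ closedBall c |R|
  · have hdist : ‖c - u‖ ≤ R := by rwa [abs_of_pos hR, mem_closedBall', dist_eq_norm] at hu
    refine mul_nonneg (mod_cast MeromorphicOn.AnalyticOnNhd.divisor_nonneg hf u) ?_
    obtain h0 | h0 := (norm_nonneg (c - u)).eq_or_lt
    · simp [← h0]
    · exact log_nonneg (by rwa [← div_eq_mul_inv, one_le_div₀ h0])
  · simp [hu]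

theorem ae_ne_zero_circleMap (hR : 0 < R) (hf : AnalyticOnNhd ℂ f (closedBall c R))
    (hc : f c ≠ 0) : ∀ᵐ θ : ℝ, f (circleMap c R θ) ≠ 0 := by
  have hball : f ⁻¹' {0}ᶜ ∈ Filter.codiscreteWithin (closedBall c R) :=
    hf.preimage_zero_mem_codiscreteWithin hc (mem_closedBall_self hR.le)
      (isConnected_closedBall hR.le)
  have hcircle : f ⁻¹' {0}ᶜ ∈ Filter.codiscreteWithin (sphere c |R|) :=
    Filter.codiscreteWithin_mono (by rw [abs_of_pos hR]; exact sphere_subset_closedBall) hball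
  have hline := ae_restrict_le_codiscreteWithin (μ := volume) MeasurableSet.univ
    (circleMap_preimage_codiscrete hR.ne' hcircle)
  rwa [Measure.restrict_univ] at hline

theorem lintegral_enorm_log_le_of_norm_circleMap_le (hR : 0 < R)
    (hf : AnalyticOnNhd ℂ f (closedBall c R)) (hc : f c ≠ 0) {F : ℝ → ℝ} {S : ℝ} (hS : 1 ≤ S)
    (hfF : ∀ θ, ‖f (circleMap c R θ)‖ ≤ F θ) (hFS : ∀ θ, F θ ≤ S) :
    ∫⁻ θ in Ioc 0 (2 * π), ‖log (F θ)‖ₑ ≤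
      ENNReal.ofReal (2 * π * (2 * log S - log ‖f c‖)) := by
  have hcircle : CircleIntegrable (log ‖f ·‖) c R :=
    MeromorphicOn.circleIntegrable_log_norm fun z hz =>
      (hf z (sphere_subset_closedBall (by rwa [abs_of_pos hR] at hz))).meromorphicAt
  have hint : IntegrableOn (fun θ => log ‖f (circleMap c R θ)‖) (Ioc 0 (2 * π)) :=
    (intervalIntegrable_iff_integrableOn_Ioc_of_le two_pi_pos.le).1 hcircle
  have hjensen : 2 * π * log ‖f c‖ ≤ ∫ θ in Ioc 0 (2 * π), log ‖f (circleMap c R θ)‖ := by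
    have := log_norm_le_circleAverage_log_norm hR hf hc
    rwa [circleAverage_def, intervalIntegral.integral_of_le two_pi_pos.le, smul_eq_mul,
      inv_mul_eq_div, le_div_iff₀' two_pi_pos] at this
  have hbound : ∀ᵐ θ ∂volume.restrict (Ioc 0 (2 * π)),
      |log (F θ)| ≤ 2 * log S - log ‖f (circleMap c R θ)‖ := by
    filter_upwards [ae_restrict_of_ae (ae_ne_zero_circleMap hR hf hc)] with θ hθ
    exact abs_log_le_of_le_of_le (norm_pos_iff.2 hθ) (hfF θ) (hFS θ) hS
  calc ∫⁻ θ in Ioc 0 (2 * π), ‖log (F θ)‖ₑ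
      ≤ ∫⁻ θ in Ioc 0 (2 * π), ENNReal.ofReal (2 * log S - log ‖f (circleMap c R θ)‖) := by
        refine lintegral_mono_ae (hbound.mono fun θ hθ => ?_)
        rw [enorm_eq_ofReal_abs]
        exact ENNReal.ofReal_le_ofReal hθ
    _ = ENNReal.ofReal (∫ θ in Ioc 0 (2 * π), (2 * log S - log ‖f (circleMap c R θ)‖)) :=
        (ofReal_integral_eq_lintegral_ofReal ((integrable_const _).sub hint)
          (hbound.mono fun θ hθ => (abs_nonneg _).trans hθ)).symm
    _ ≤ ENNReal.ofReal (2 * π * (2 * log S - log ‖f c‖)) := by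
        refine ENNReal.ofReal_le_ofReal ?_
        rw [integral_sub (integrable_const _) hint, setIntegral_const, volume_real_Ioc_of_le
          two_pi_pos.le, sub_zero, smul_eq_mul, mul_sub]
        exact sub_le_sub_left hjensen _

end Jensen

section Averaging

variable {G X : Type*} [Group G] [MeasurableSpace G] [MeasurableMul₂ G] [MeasurableSpace X]
  {μ : Measure G} [μ.IsMulLeftInvariant] {ν : Measure X} [SFinite ν] {g : X → G}
  {f : G → ENNReal}

theorem lintegral_lintegral_mul_left [SFinite μ] (hf : Measurable f) (hg : Measurable g) :
    ∫⁻ q, ∫⁻ x, f (g x * q) ∂ν ∂μ = ν univ * ∫⁻ q, f q ∂μ := by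
  rw [lintegral_lintegral_swap]
  · simp_rw [lintegral_mul_left_eq_self f, lintegral_const, mul_comm]
  · exact (hf.comp ((hg.comp measurable_snd).mul measurable_fst)).aemeasurable

theorem lintegral_lt_top_of_forall_lintegral_mul_left_le [IsFiniteMeasure μ] (hν : ν ≠ 0)
    (hf : Measurable f) (hg : Measurable g) {C : ENNReal} (hC : C ≠ ⊤)
    (hfC : ∀ q, ∫⁻ x, f (g x * q) ∂ν ≤ C) : ∫⁻ q, f q ∂μ < ⊤ := by
  have haverage : ν univ * ∫⁻ q, f q ∂μ < ⊤ := by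
    rw [← lintegral_lintegral_mul_left hf hg]
    exact (lintegral_mono hfC).trans_lt (by rw [lintegral_const]; finiteness)
  exact ENNReal.lt_top_of_mul_ne_top_right haverage.ne (by simpa using hν)

end Averaging

theorem measurePreserving_inv_mul_mul {G : Type*} [Group G] [TopologicalSpace G]
    [IsTopologicalGroup G] [CompactSpace G] [MeasurableSpace G] [BorelSpace G] (μ : Measure G)
    [μ.IsHaarMeasure] (u : G) : MeasurePreserving (fun q => u⁻¹ * q * u) μ μ := by
  have hconj : ⇑(MulAut.conj u⁻¹).toMonoidHom = fun q => u⁻¹ * q * u := by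
    funext q
    simp
  rw [← hconj]
  exact MonoidHom.measurePreserving (by rw [hconj]; fun_prop) (MulAut.conj u⁻¹).surjective rfl

section SliceEval

variable {A : Type*} {n : ℕ}

/-- The value at `q` of the slice regular polynomial with coefficients `a 0, …, a n`, which are
written to the right of the powers of `q`. -/
def sliceEval [Semiring A] (a : Fin (n + 1) → A) (q : A) : A :=
  ∑ k : Fin (n + 1), q ^ (k : ℕ) * a k

theorem sliceEval_mul_const [Semiring A] (a : Fin (n + 1) → A) (q b : A) :
    sliceEval (fun k => a k * b) q = sliceEval a q * b := by
  simp only [sliceEval, Finset.sum_mul, mul_assoc]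

theorem sliceEval_units_conj [Semiring A] (a : Fin (n + 1) → A) (u : Aˣ) (q : A) :
    sliceEval (fun k => ↑u⁻¹ * a k * u) (↑u⁻¹ * q * u) = ↑u⁻¹ * sliceEval a q * u := by
  simp only [sliceEval, Units.conj_pow', Finset.mul_sum, Finset.sum_mul]
  simp only [mul_assoc, Units.mul_inv_cancel_left]

theorem sliceEval_castSucc [Semiring A] (a : Fin (n + 2) → A) (ha : a (Fin.last (n + 1)) = 0) :
    sliceEval (fun k : Fin (n + 1) => a k.castSucc) = sliceEval a := by
  funext q
  simp [sliceEval, Fin.sum_univ_castSucc (n := n + 1), ha]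

@[fun_prop]
theorem continuous_sliceEval [Semiring A] [TopologicalSpace A] [IsTopologicalSemiring A]
    (a : Fin (n + 1) → A) : Continuous (sliceEval a) := by
  unfold sliceEval
  fun_prop

theorem norm_sliceEval_le [SeminormedRing A] [NormOneClass A] (a : Fin (n + 1) → A) {q : A}
    (hq : ‖q‖ ≤ 1) : ‖sliceEval a q‖ ≤ ∑ k, ‖a k‖ := by
  refine (norm_sum_le _ _).trans (Finset.sum_le_sum fun k _ => (norm_mul_le _ _).trans ?_)
  exact mul_le_of_le_one_left (norm_nonneg _)
    ((norm_pow_le _ _).trans (pow_le_one₀ (norm_nonneg _) hq))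

end SliceEval

section ComplexMatrix

/-- The representation of the quaternions by complex matrices, sending `z + w j` with
`z w : ℂ` to `!![z, w; -conj w, conj z]`. -/
def quaternionToMatrix : ℍ[ℝ] →+* Matrix (Fin 2) (Fin 2) ℂ where
  toFun q := !![⟨q.re, q.imI⟩, ⟨q.imJ, q.imK⟩; ⟨-q.imJ, q.imK⟩, ⟨q.re, -q.imI⟩]
  map_one' := by ext i j; fin_cases i <;> fin_cases j <;> simp [Complex.ext_iff]
  map_zero' := by ext i j; fin_cases i <;> fin_cases j <;> simp [Complex.ext_iff]
  map_add' p q := by ext i j; fin_cases i <;> fin_cases j <;> simp [Complex.ext_iff, add_comm]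
  map_mul' p q := by
    ext i j
    fin_cases i <;> fin_cases j <;> simp [Complex.ext_iff] <;> constructor <;> ring

theorem quaternionToMatrix_zero_zero (q : ℍ[ℝ]) :
    quaternionToMatrix q 0 0 = ⟨q.re, q.imI⟩ := rfl

theorem sq_norm_quaternionToMatrix_zero_zero (q : ℍ[ℝ]) :
    ‖quaternionToMatrix q 0 0‖ ^ 2 = q.re ^ 2 + q.imI ^ 2 := by
  rw [quaternionToMatrix_zero_zero, Complex.sq_norm, Complex.normSq_mk, sq, sq]

theorem sq_norm_quaternion (q : ℍ[ℝ]) :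
    ‖q‖ ^ 2 = q.re ^ 2 + q.imI ^ 2 + q.imJ ^ 2 + q.imK ^ 2 := by
  rw [sq, ← normSq_eq_norm_mul_self, normSq_def']

theorem norm_quaternionToMatrix_zero_zero_le (q : ℍ[ℝ]) : ‖quaternionToMatrix q 0 0‖ ≤ ‖q‖ := by
  refine le_of_sq_le_sq ?_ (norm_nonneg q)
  rw [sq_norm_quaternionToMatrix_zero_zero, sq_norm_quaternion]
  linarith [sq_nonneg q.imJ, sq_nonneg q.imK]

theorem continuous_quaternionToMatrix_zero_zero :
    Continuous fun q : ℍ[ℝ] => quaternionToMatrix q 0 0 := by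
  have : (fun q : ℍ[ℝ] => quaternionToMatrix q 0 0) = fun q => q.re + q.imI * Complex.I := by
    funext q
    simp [quaternionToMatrix_zero_zero, Complex.ext_iff]
  rw [this]
  exact (Complex.continuous_ofReal.comp continuous_re).add
    ((Complex.continuous_ofReal.comp continuous_imI).mul continuous_const)

theorem quaternionToMatrix_coeComplex (z : ℂ) :
    quaternionToMatrix z = Matrix.diagonal ![z, star z] := by
  ext i j
  fin_cases i <;> fin_cases j <;> simp [quaternionToMatrix, Complex.ext_iff]

theorem norm_coeComplex (z : ℂ) : ‖(z : ℍ[ℝ])‖ = ‖z‖ := by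
  rw [← sq_eq_sq₀ (norm_nonneg _) (norm_nonneg _), sq_norm_quaternion, Complex.sq_norm,
    Complex.normSq_apply]
  simp [sq]

end ComplexMatrix

section CircleExtension

variable {n : ℕ}

/-- The inclusion of the unit circle of `ℂ` into the unit quaternions. -/
noncomputable def circleToSphere (t : Circle) : sphere (0 : ℍ[ℝ]) 1 :=
  ⟨((t : ℂ) : ℍ[ℝ]), by rw [mem_sphere_zero_iff_norm, norm_coeComplex, Circle.norm_coe]⟩

theorem continuous_circleToSphere : Continuous circleToSphere :=
  (ofComplex.toLinearMap.continuous_of_finiteDimensional.comp continuous_subtype_val).subtype_mk _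

theorem quaternionToMatrix_circleToSphere (t : Circle) :
    quaternionToMatrix (circleToSphere t) = Matrix.diagonal ![(t : ℂ), ((t⁻¹ : Circle) : ℂ)] := by
  rw [circleToSphere, quaternionToMatrix_coeComplex, Complex.star_def, Circle.coe_inv_eq_conj]

theorem norm_quaternionToMatrix_circleToSphere_mul (t : Circle) (q : ℍ[ℝ]) :
    ‖quaternionToMatrix (circleToSphere t * q) 0 0‖ = ‖quaternionToMatrix q 0 0‖ := by
  rw [map_mul, quaternionToMatrix_circleToSphere, Matrix.diagonal_mul, norm_mul,
    Matrix.cons_val_zero, Circle.norm_coe, one_mul]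

/-- The holomorphic function of `t` that agrees with the upper left entry of
`t ^ n • quaternionToMatrix (sliceEval a (t⁻¹ * q))` on the unit circle. It comes from
`t • quaternionToMatrix t⁻¹ = t • diag(t⁻¹, t) = diag(1, t ^ 2)`, which is polynomial in `t`. -/
noncomputable def circleExtension (a : Fin (n + 1) → ℍ[ℝ]) (q : ℍ[ℝ]) (t : ℂ) : ℂ :=
  (∑ k : Fin (n + 1), t ^ (n - k : ℕ) •
    ((Matrix.diagonal ![1, t ^ 2] * quaternionToMatrix q) ^ (k : ℕ) *
      quaternionToMatrix (a k))) 0 0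

theorem circleExtension_coe (a : Fin (n + 1) → ℍ[ℝ]) (q : ℍ[ℝ]) (t : Circle) :
    circleExtension a q t =
      t ^ n * quaternionToMatrix (sliceEval a (circleToSphere t⁻¹ * q)) 0 0 := by
  have hrot : Matrix.diagonal ![1, (t : ℂ) ^ 2] * quaternionToMatrix q =
      (t : ℂ) • quaternionToMatrix (circleToSphere t⁻¹ * q) := by
    rw [map_mul, quaternionToMatrix_circleToSphere, ← smul_mul_assoc, ← Matrix.diagonal_smul]
    simp [sq]
  have hterm (k : Fin (n + 1)) : (t : ℂ) ^ (n - k : ℕ) •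
      ((t : ℂ) • quaternionToMatrix (circleToSphere t⁻¹ * q)) ^ (k : ℕ) =
        (t : ℂ) ^ n • quaternionToMatrix (circleToSphere t⁻¹ * q) ^ (k : ℕ) := by
    rw [smul_pow, smul_smul, pow_sub_mul_pow _ (Fin.is_le k)]
  simp only [circleExtension, hrot, ← smul_mul_assoc, hterm]
  simp only [smul_mul_assoc, ← Finset.smul_sum, sliceEval, map_sum, map_mul, map_pow,
    Matrix.smul_apply, smul_eq_mul]

theorem circleExtension_zero {a : Fin (n + 1) → ℍ[ℝ]} (ha : a (Fin.last n) = 1) (q : ℍ[ℝ]) :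
    circleExtension a q 0 = quaternionToMatrix q 0 0 ^ n := by
  have hpow (k : ℕ) : ((Matrix.diagonal ![1, 0] * quaternionToMatrix q) ^ k :
      Matrix (Fin 2) (Fin 2) ℂ) 0 0 = quaternionToMatrix q 0 0 ^ k := by
    induction k with
    | zero => simp
    | succ k ih => rw [pow_succ, pow_succ, Matrix.mul_apply, Fin.sum_univ_two]; simp [ih]
  rw [circleExtension, Finset.sum_eq_single (Fin.last n)]
  · simp [ha, hpow]
  · intro k _ hk
    rw [zero_pow (Nat.sub_pos_of_lt (Fin.val_lt_last hk)).ne', zero_smul]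
  · simp

attribute [local instance] Matrix.linftyOpNormedRing Matrix.linftyOpNormedAlgebra in
theorem differentiable_circleExtension (a : Fin (n + 1) → ℍ[ℝ]) (q : ℍ[ℝ]) :
    Differentiable ℂ (circleExtension a q) := by
  have hdiag : Differentiable ℂ fun t : ℂ => Matrix.diagonal ![1, t ^ 2] := by
    have : (fun t : ℂ => Matrix.diagonal ![1, t ^ 2]) =
        fun t => Matrix.diagonal ![1, 0] + t ^ 2 • Matrix.diagonal ![0, 1] := by
      funext t
      simp [← Matrix.diagonal_smul, Matrix.diagonal_add]
    rw [this]
    fun_prop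
  have hsum : Differentiable ℂ fun t : ℂ => ∑ k : Fin (n + 1), t ^ (n - k : ℕ) •
      ((Matrix.diagonal ![1, t ^ 2] * quaternionToMatrix q) ^ (k : ℕ) *
        quaternionToMatrix (a k)) := by
    fun_prop
  exact (LinearMap.toContinuousLinearMap
    (Matrix.entryLinearMap ℂ ℂ (0 : Fin 2) (0 : Fin 2))).differentiable.comp hsum

end CircleExtension

section SphereIntegrals

variable {n : ℕ} {a : Fin (n + 1) → ℍ[ℝ]}

theorem lintegral_enorm_log_norm_sliceEval_circle_le (ha : a (Fin.last n) = 1) {q : ℍ[ℝ]}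
    (hq : ‖q‖ ≤ 1) {r : ℝ} (hr : 0 < r) (hrq : r ≤ ‖quaternionToMatrix q 0 0‖) :
    ∫⁻ θ in Ioc 0 (2 * π), ‖log ‖sliceEval a (circleToSphere (Circle.exp θ)⁻¹ * q)‖‖ₑ ≤
      ENNReal.ofReal (2 * π * (2 * log (∑ k, ‖a k‖) - log (r ^ n))) := by
  have hzero : r ^ n ≤ ‖circleExtension a q 0‖ := by
    rw [circleExtension_zero ha, norm_pow]
    gcongr
  have hcoeff : 1 ≤ ∑ k, ‖a k‖ := by
    simpa [ha] using Finset.single_le_sum (f := fun k => ‖a k‖) (fun k _ => norm_nonneg _)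
      (Finset.mem_univ (Fin.last n))
  have hlower (θ : ℝ) : ‖circleExtension a q (circleMap 0 1 θ)‖ ≤
      ‖sliceEval a (circleToSphere (Circle.exp θ)⁻¹ * q)‖ := by
    have hθ : circleMap 0 1 θ = Circle.exp θ := by simp [circleMap]
    rw [hθ, circleExtension_coe, norm_mul, norm_pow, Circle.norm_coe, one_pow, one_mul]
    exact norm_quaternionToMatrix_zero_zero_le _
  have hupper (θ : ℝ) : ‖sliceEval a (circleToSphere (Circle.exp θ)⁻¹ * q)‖ ≤ ∑ k, ‖a k‖ :=
    norm_sliceEval_le a (by rwa [norm_mul, norm_eq_of_mem_sphere, one_mul])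
  refine (lintegral_enorm_log_le_of_norm_circleMap_le one_pos
    (fun z _ => (differentiable_circleExtension a q).analyticAt z)
    (norm_pos_iff.1 ((pow_pos hr n).trans_le hzero)) hcoeff hlower hupper).trans ?_
  gcongr

variable {μ : Measure (sphere (0 : ℍ[ℝ]) 1)} [μ.IsHaarMeasure]

theorem isClosed_le_norm_quaternionToMatrix_zero_zero (r : ℝ) :
    IsClosed {q : sphere (0 : ℍ[ℝ]) 1 | r ≤ ‖quaternionToMatrix q 0 0‖} :=
  isClosed_le continuous_const
    (continuous_quaternionToMatrix_zero_zero.comp continuous_subtype_val).norm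

theorem integrableOn_log_norm_sliceEval (ha : a (Fin.last n) = 1) {r : ℝ} (hr : 0 < r) :
    IntegrableOn (fun q : sphere (0 : ℍ[ℝ]) 1 => log ‖sliceEval a q‖)
      {q | r ≤ ‖quaternionToMatrix q 0 0‖} μ := by
  set A : Set (sphere (0 : ℍ[ℝ]) 1) := {q | r ≤ ‖quaternionToMatrix q 0 0‖}
  have hA : MeasurableSet A := (isClosed_le_norm_quaternionToMatrix_zero_zero r).measurableSet
  have hmeas : Measurable fun q : sphere (0 : ℍ[ℝ]) 1 => log ‖sliceEval a q‖ := by fun_prop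
  have hrot : Measurable fun θ => circleToSphere (Circle.exp θ)⁻¹ :=
    (continuous_circleToSphere.comp (map_continuous Circle.exp).inv).measurable
  refine ⟨hmeas.aestronglyMeasurable, ?_⟩
  rw [hasFiniteIntegral_iff_enorm, ← lintegral_indicator hA]
  refine lintegral_lt_top_of_forall_lintegral_mul_left_le (ν := volume.restrict (Ioc 0 (2 * π)))
    (C := ENNReal.ofReal (2 * π * (2 * log (∑ k, ‖a k‖) - log (r ^ n))))
    (by simp [Measure.restrict_eq_zero, pi_pos]) (hmeas.enorm.indicator hA) hrot
    ENNReal.ofReal_ne_top fun q => ?_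
  have hinv (θ : ℝ) : circleToSphere (Circle.exp θ)⁻¹ * q ∈ A ↔ q ∈ A := by
    simp only [A, mem_ofPred_eq, Metric.unitSphere.coe_mul,
      norm_quaternionToMatrix_circleToSphere_mul]
  by_cases hq : q ∈ A
  · simp only [indicator_of_mem ((hinv _).2 hq), Metric.unitSphere.coe_mul]
    exact lintegral_enorm_log_norm_sliceEval_circle_le ha (norm_eq_of_mem_sphere q).le hr hq
  · simp [indicator_of_notMem (mt (hinv _).1 hq)]

theorem integrableOn_log_norm_sliceEval_conj (ha : a (Fin.last n) = 1) {r : ℝ} (hr : 0 < r)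
    (u : sphere (0 : ℍ[ℝ]) 1) :
    IntegrableOn (fun q : sphere (0 : ℍ[ℝ]) 1 => log ‖sliceEval a q‖)
      {q | r ≤ ‖quaternionToMatrix ↑(u⁻¹ * q * u) 0 0‖} μ := by
  have hnorm (q : sphere (0 : ℍ[ℝ]) 1) : ‖sliceEval a q‖ =
      ‖sliceEval (fun k => ↑u⁻¹ * a k * u) ↑(u⁻¹ * q * u)‖ := by
    have := congrArg norm (sliceEval_units_conj a (unitSphereToUnits ℍ[ℝ] u) q)
    simpa [-map_inv] using this.symm
  have hmonic : (↑u⁻¹ * a (Fin.last n) * u : ℍ[ℝ]) = 1 := by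
    rw [ha, mul_one, ← Metric.unitSphere.coe_mul, inv_mul_cancel, Metric.unitSphere.coe_one]
  simp only [hnorm]
  exact ((measurePreserving_inv_mul_mul μ u).restrict_preimage
    (isClosed_le_norm_quaternionToMatrix_zero_zero r).measurableSet).integrable_comp_of_integrable
      (integrableOn_log_norm_sliceEval hmonic hr)

theorem coe_inv_eq_star (u : sphere (0 : ℍ[ℝ]) 1) : (↑u⁻¹ : ℍ[ℝ]) = star (u : ℍ[ℝ]) := by
  rw [Metric.unitSphere.coe_inv, Quaternion.inv_def, normSq_eq_norm_mul_self,
    norm_eq_of_mem_sphere, mul_one, inv_one, one_smul]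

/-- The Hurwitz unit `(1 + i + j + k) / 2`, conjugation by which permutes `i`, `j` and `k`
cyclically. -/
noncomputable def hurwitzUnit : sphere (0 : ℍ[ℝ]) 1 :=
  ⟨(⟨1 / 2, 1 / 2, 1 / 2, 1 / 2⟩ : ℍ[ℝ]), mem_sphere_zero_iff_norm.2 <|
    (sq_eq_sq₀ (norm_nonneg _) zero_le_one).1 <| (sq_norm_quaternion _).trans (by norm_num)⟩

theorem components_hurwitzUnit_inv_mul_mul (q : sphere (0 : ℍ[ℝ]) 1) :
    (↑(hurwitzUnit⁻¹ * q * hurwitzUnit) : ℍ[ℝ]).re = (q : ℍ[ℝ]).re ∧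
      (↑(hurwitzUnit⁻¹ * q * hurwitzUnit) : ℍ[ℝ]).imI = (q : ℍ[ℝ]).imJ ∧
      (↑(hurwitzUnit⁻¹ * q * hurwitzUnit) : ℍ[ℝ]).imJ = (q : ℍ[ℝ]).imK ∧
      (↑(hurwitzUnit⁻¹ * q * hurwitzUnit) : ℍ[ℝ]).imK = (q : ℍ[ℝ]).imI := by
  have hre : (hurwitzUnit : ℍ[ℝ]).re = 1 / 2 := rfl
  have hi : (hurwitzUnit : ℍ[ℝ]).imI = 1 / 2 := rfl
  have hj : (hurwitzUnit : ℍ[ℝ]).imJ = 1 / 2 := rfl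
  have hk : (hurwitzUnit : ℍ[ℝ]).imK = 1 / 2 := rfl
  simp only [Metric.unitSphere.coe_mul, coe_inv_eq_star, re_mul, imI_mul, imJ_mul, imK_mul,
    re_star, imI_star, imJ_star, imK_star, hre, hi, hj, hk]
  refine ⟨?_, ?_, ?_, ?_⟩ <;> ring

theorem exists_half_le_norm_quaternionToMatrix (q : sphere (0 : ℍ[ℝ]) 1) :
    ∃ m : Fin 3, 1 / 2 ≤ ‖quaternionToMatrix
      ↑((hurwitzUnit ^ (m : ℕ))⁻¹ * q * hurwitzUnit ^ (m : ℕ)) 0 0‖ := by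
  by_contra! hlt
  have hsq (m : Fin 3) := pow_lt_pow_left₀ (hlt m) (norm_nonneg _) two_ne_zero
  obtain ⟨hre, hi, hj, -⟩ := components_hurwitzUnit_inv_mul_mul q
  obtain ⟨hre', hi', -, -⟩ := components_hurwitzUnit_inv_mul_mul (hurwitzUnit⁻¹ * q * hurwitzUnit)
  have h0 : (q : ℍ[ℝ]).re ^ 2 + (q : ℍ[ℝ]).imI ^ 2 < (1 / 2) ^ 2 := by
    simpa only [sq_norm_quaternionToMatrix_zero_zero, Fin.val_zero, pow_zero, inv_one, one_mul,
      mul_one] using hsq 0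
  have h1 : (q : ℍ[ℝ]).re ^ 2 + (q : ℍ[ℝ]).imJ ^ 2 < (1 / 2) ^ 2 := by
    simpa only [sq_norm_quaternionToMatrix_zero_zero, Fin.val_one, pow_one, hre, hi] using hsq 1
  have h2 : (q : ℍ[ℝ]).re ^ 2 + (q : ℍ[ℝ]).imK ^ 2 < (1 / 2) ^ 2 := by
    rw [← hre, ← hj, ← hre', ← hi']
    simpa only [sq_norm_quaternionToMatrix_zero_zero, Fin.val_two, sq hurwitzUnit, mul_inv_rev,
      mul_assoc] using hsq 2
  -- the three squared moduli add up to `3 re ^ 2 + ‖im‖ ^ 2`, which is at least `‖q‖ ^ 2 = 1`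
  have hq := sq_norm_quaternion q
  rw [norm_eq_of_mem_sphere] at hq
  linarith [sq_nonneg (q : ℍ[ℝ]).re]

theorem integrable_log_norm_sliceEval_of_last_eq_one (ha : a (Fin.last n) = 1) :
    Integrable (fun q : sphere (0 : ℍ[ℝ]) 1 => log ‖sliceEval a q‖) μ := by
  have hcover : ⋃ m : Fin 3, {q | 1 / 2 ≤ ‖quaternionToMatrix
      ↑((hurwitzUnit ^ (m : ℕ))⁻¹ * q * hurwitzUnit ^ (m : ℕ)) 0 0‖} = univ :=
    iUnion_eq_univ_iff.2 exists_half_le_norm_quaternionToMatrix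
  rw [← integrableOn_univ, ← hcover, integrableOn_finite_iUnion]
  exact fun m => integrableOn_log_norm_sliceEval_conj ha one_half_pos _

theorem integrable_log_norm_sliceEval_of_last_ne_zero (ha : a (Fin.last n) ≠ 0) :
    Integrable (fun q : sphere (0 : ℍ[ℝ]) 1 => log ‖sliceEval a q‖) μ := by
  have hmonic : Integrable (fun q : sphere (0 : ℍ[ℝ]) 1 =>
      log ‖sliceEval (fun k => a k * (a (Fin.last n))⁻¹) q‖) μ :=
    integrable_log_norm_sliceEval_of_last_eq_one (mul_inv_cancel₀ ha)
  have hmeas : Measurable fun q : sphere (0 : ℍ[ℝ]) 1 => log ‖sliceEval a q‖ := by fun_prop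
  refine (hmonic.abs.add (integrable_const |log ‖a (Fin.last n)‖|)).mono'
    hmeas.aestronglyMeasurable (.of_forall fun q => ?_)
  have hq : ‖sliceEval a q‖ =
      ‖sliceEval (fun k => a k * (a (Fin.last n))⁻¹) q‖ * ‖a (Fin.last n)‖ := by
    rw [sliceEval_mul_const, ← norm_mul, inv_mul_cancel_right₀ ha]
  rw [hq]
  exact abs_log_mul_le _ _

end SphereIntegrals

/-- existence of the Mahler measure of a slice regular polynomial:
`log |P(q)|` is integrable on the unit quaternions. -/
theorem integrable_log_slice_regular (n : ℕ) (a : Fin (n + 1) → Quaternion ℝ) (ha : a ≠ 0) :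
    Integrable (fun q : Metric.sphere (0 : Quaternion ℝ) 1 =>
      Real.log ‖∑ k : Fin (n + 1), (q : Quaternion ℝ) ^ (k : ℕ) * a k‖) muH := by
  have : muH.IsHaarMeasure := Measure.isHaarMeasure_haarMeasure _
  change Integrable (fun q : sphere (0 : ℍ[ℝ]) 1 => log ‖sliceEval a q‖) muH
  induction n with
  | zero =>
    exact integrable_log_norm_sliceEval_of_last_ne_zero fun h => ha (funext fun k => by
      rwa [Fin.fin_one_eq_zero k])
  | succ n ih =>
    obtain hlast | hlast := ne_or_eq (a (Fin.last (n + 1))) 0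
    · exact integrable_log_norm_sliceEval_of_last_ne_zero hlast
    · rw [← sliceEval_castSucc a hlast]
      exact ih _ fun h => ha (funext (Fin.lastCases hlast (congrFun h)))
end
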